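/- Let f ∈ LlogL(-1,1). Then T(f)(t) = 0 for almost every t ∈ (-1,1) if and only if there exists a constant c ∈ ℂ such that f(x) = c/√(1-x²) for almost every x ∈ (-1,1). That is, the kernel of T : LlogL(-1,1) → L^1(-1,1) is the one-dimensional span of the function x ↦ 1/√(1-x²). -/

import Mathlib

open MeasureTheory Set Filter

noncomputable section

/-- Lebesgue measure restricted to the interval `(-1, 1)`. -/
def μI : Measure ℝ := volume.restrict (Set.Ioo (-1 : ℝ) 1)

/-- The finite Hilbert transform: the principal-value limit
`T(f)(t) = lim_{ε→0⁺} (1/π) ∫_{x∈(-1,1), |x-t|≥ε} f(x)/(x-t) dx`. -/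
def FHT (f : ℝ → ℂ) (t : ℝ) : ℂ :=
  limUnder (nhdsWithin (0 : ℝ) (Set.Ioi 0)) fun ε : ℝ =>
    (Real.pi : ℂ)⁻¹ *
      ∫ x in {x : ℝ | x ∈ Set.Ioo (-1 : ℝ) 1 ∧ ε ≤ |x - t|}, f x / ((x : ℂ) - (t : ℂ))

/-- The operator `T̂(g)(x) = -(1-x²)^{-1/2} T(t ↦ √(1-t²) g(t))(x)`. -/
def hatT (g : ℝ → ℂ) (x : ℝ) : ℂ :=
  -((Real.sqrt (1 - x ^ 2) : ℂ))⁻¹ * FHT (fun t => (Real.sqrt (1 - t ^ 2) : ℂ) * g t) x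

/-- Membership in the Zygmund space `L log L(-1,1)`:
`f` is a.e. measurable on `(-1,1)` and `∫ |f| log⁺|f| < ∞`. -/
def MemLlogL (f : ℝ → ℂ) : Prop :=
  AEStronglyMeasurable f μI ∧
    IntegrableOn (fun x => ‖f x‖ * max (Real.log ‖f x‖) 0) (Set.Ioo (-1 : ℝ) 1)

/-- The distribution function `λ ↦ |{x ∈ (-1,1) : |f(x)| > λ}|`. -/
def distFun (f : ℝ → ℂ) (lam : ℝ) : ℝ :=
  (volume {x : ℝ | x ∈ Set.Ioo (-1 : ℝ) 1 ∧ lam < ‖f x‖}).toReal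

/-- The decreasing rearrangement `f*` of `f`, a function on `(0,2)`. -/
def decRearr (f : ℝ → ℂ) (t : ℝ) : ℝ :=
  sInf {lam : ℝ | 0 ≤ lam ∧ distFun f lam ≤ t}

/-- The `L log L` norm `‖f‖ = ∫_0^2 f*(t) log(2e/t) dt`. -/
def llogLNorm (f : ℝ → ℂ) : ℝ :=
  ∫ t in Set.Ioo (0 : ℝ) 2, decRearr f t * Real.log (2 * Real.exp 1 / t)

/-- The `L(log L)^α` norm `∫_0^2 f*(t) log^α(2e/t) dt` (for `α = 0` this is the `L¹` norm). -/
def zygNorm (α : ℝ) (f : ℝ → ℂ) : ℝ :=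
  ∫ t in Set.Ioo (0 : ℝ) 2, decRearr f t * Real.log (2 * Real.exp 1 / t) ^ α

/-- Membership in the Zygmund space `L(log L)^α(-1,1)`. -/
def MemZyg (α : ℝ) (f : ℝ → ℂ) : Prop :=
  AEStronglyMeasurable f μI ∧
    IntegrableOn (fun t => decRearr f t * Real.log (2 * Real.exp 1 / t) ^ α)
      (Set.Ioo (0 : ℝ) 2)

/-- Membership in `L(log L)²(-1,1)`: `∫ |f| (log(2+|f|))² < ∞`. -/
def MemLlogL2 (f : ℝ → ℂ) : Prop :=
  AEStronglyMeasurable f μI ∧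
    IntegrableOn (fun x => ‖f x‖ * Real.log (2 + ‖f x‖) ^ 2) (Set.Ioo (-1 : ℝ) 1)

/-- The constant `c(β,γ) = max{1/(1-β), 1/(1-γ), 1/(β+γ-1)}`. -/
def cBG (β γ : ℝ) : ℝ := max (max (1 / (1 - β)) (1 / (1 - γ))) (1 / (β + γ - 1))

open scoped Topology

lemma circ_subst (g : ℂ → ℂ) :
    ∫ θ in (-Real.pi)..Real.pi, g (Complex.exp (θ * Complex.I)) =
      ∫ t : ℝ, ((2 / (1 + t ^ 2) : ℝ) : ℂ) * g ((1 + t * Complex.I) / (1 - t * Complex.I)) := by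
  have h1 := integral_image_eq_integral_abs_deriv_smul (s := Set.univ)
    (f := fun t : ℝ => 2 * Real.arctan t) (f' := fun t => 2 * (1 / (1 + t ^ 2)))
    MeasurableSet.univ
    (fun t _ => ((Real.hasDerivAt_arctan t).const_mul 2).hasDerivWithinAt)
    (fun a _ b _ h => Real.arctan_injective (by simpa using h))
    (fun θ : ℝ => g (Complex.exp (θ * Complex.I)))
  have him : (fun t : ℝ => 2 * Real.arctan t) '' Set.univ = Ioo (-Real.pi) Real.pi := by
    ext x
    constructor
    · rintro ⟨t, -, rfl⟩
      have := Real.neg_pi_div_two_lt_arctan t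
      have := Real.arctan_lt_pi_div_two t
      constructor <;> simp only <;> linarith
    · rintro ⟨h1, h2⟩
      refine ⟨Real.tan (x / 2), trivial, ?_⟩
      simp only
      rw [Real.arctan_tan (by linarith) (by linarith)]; ring
  rw [him] at h1
  rw [intervalIntegral.integral_of_le (by linarith [Real.pi_pos]), integral_Ioc_eq_integral_Ioo, h1,
    Measure.restrict_univ]
  congr 1
  ext t
  have hp : (0:ℝ) < 1 + t ^ 2 := by positivity
  rw [abs_of_pos (by positivity)]
  have he : Complex.exp (((2 * Real.arctan t : ℝ) : ℂ) * Complex.I)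
      = (1 + t * Complex.I) / (1 - t * Complex.I) := by
    have e1 : Complex.exp (((2 * Real.arctan t : ℝ) : ℂ) * Complex.I)
      = Complex.exp ((Real.arctan t : ℂ) * Complex.I) ^ 2 := by
      rw [← Complex.exp_nat_mul]; congr 1; push_cast; ring
    have hne : (1 - t * Complex.I : ℂ) ≠ 0 := by
      intro h
      have := congrArg Complex.re h
      simp at this
    have hs : (Real.sqrt (1 + t ^ 2) : ℂ) ^ 2 = 1 + (t:ℂ) ^ 2 := by
      rw [← Complex.ofReal_pow, Real.sq_sqrt hp.le]; push_cast; ring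
    have hs0 : (Real.sqrt (1 + t ^ 2) : ℂ) ≠ 0 := by
      exact_mod_cast (Real.sqrt_pos.2 hp).ne'
    rw [e1, Complex.exp_mul_I, ← Complex.ofReal_cos, ← Complex.ofReal_sin, Real.cos_arctan,
      Real.sin_arctan]
    push_cast
    field_simp
    rw [hs]
    ring_nf
    rw [Complex.I_pow_three, Complex.I_sq]
    ring
  rw [he]
  rw [Complex.real_smul]
  congr 2
  ring

/-- Poisson formula at `i`. -/
lemma poisson_i (G : ℂ → ℂ) (δ : ℝ) (hδ : 0 < δ)
    (hd : ∀ z : ℂ, -δ < z.im → DifferentiableAt ℂ G z) (M : ℝ)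
    (hb : ∀ z : ℂ, 0 ≤ z.im → ‖G z‖ ≤ M) :
    ∫ t : ℝ, ((1 / (1 + t ^ 2) : ℝ) : ℂ) * G t = Real.pi * G Complex.I := by
  set φ : ℂ → ℂ := fun ζ => Complex.I * (1 - ζ) / (1 + ζ) with hφ
  have him : ∀ ζ : ℂ, (φ ζ).im = (1 - ‖ζ‖ ^ 2) / Complex.normSq (1 + ζ) := by
    intro ζ
    rw [← Complex.normSq_eq_norm_sq, hφ]
    simp only [Complex.div_im, Complex.mul_re, Complex.mul_im, Complex.I_re, Complex.I_im,
      Complex.sub_re, Complex.sub_im, Complex.add_re, Complex.add_im, Complex.one_re,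
      Complex.one_im]
    rw [Complex.normSq_apply ζ]
    ring
  have him0 : ∀ ζ : ℂ, ‖ζ‖ ≤ 1 → 0 ≤ (φ ζ).im := by
    intro ζ h
    rw [him]
    exact div_nonneg (by nlinarith [norm_nonneg ζ]) (Complex.normSq_nonneg _)
  have hne : ∀ ζ : ℂ, ‖ζ‖ < 1 → 1 + ζ ≠ 0 := by
    intro ζ h h0
    have : ζ = -1 := by linear_combination h0
    rw [this] at h; simp at h
  have hmean : ∀ r : ℝ, 0 < r → r < 1 →
      ∫ t : ℝ, ((2 / (1 + t ^ 2) : ℝ) : ℂ) *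
        G (φ (r * ((1 + t * Complex.I) / (1 - t * Complex.I)))) = 2 * Real.pi * G Complex.I := by
    intro r hr0 hr1
    have h1 : Real.circleAverage (fun ζ => G (φ ζ)) 0 r = G (φ 0) := by
      apply DiffContOnCl.circleAverage
      apply DifferentiableOn.diffContOnCl
      intro ζ hζ
      rw [abs_of_pos hr0, closure_ball _ hr0.ne'] at hζ
      have hζ1 : ‖ζ‖ < 1 := by
        have := mem_closedBall_zero_iff.1 hζ
        linarith
      apply DifferentiableAt.differentiableWithinAt
      have : DifferentiableAt ℂ φ ζ := by
        rw [hφ]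
        have := hne ζ hζ1
        fun_prop (disch := assumption)
      exact (hd _ (by linarith [him0 ζ hζ1.le])).comp ζ this
    have h0 : φ 0 = Complex.I := by simp [hφ]
    rw [h0, Real.circleAverage_eq_integral_add (-Real.pi)] at h1
    rw [intervalIntegral.integral_comp_add_right (fun θ => G (φ (circleMap 0 r θ)))] at h1
    have h2 := circ_subst (fun ζ => G (φ (r * ζ)))
    rw [← h2, ← h1]
    have e : (2 * Real.pi + -Real.pi) = Real.pi := by ring
    rw [e, zero_add, Complex.real_smul]
    simp only [circleMap, zero_add]
    have := Real.pi_pos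
    have : (2 * Real.pi : ℂ) ≠ 0 := by exact_mod_cast (by positivity : 2 * Real.pi ≠ 0)
    push_cast
    rw [← mul_assoc, mul_inv_cancel₀ this, one_mul]
  have hlim : Tendsto (fun r : ℝ => ∫ t : ℝ, ((2 / (1 + t ^ 2) : ℝ) : ℂ) *
        G (φ (r * ((1 + t * Complex.I) / (1 - t * Complex.I))))) (𝓝[<] 1)
        (𝓝 (∫ t : ℝ, ((2 / (1 + t ^ 2) : ℝ) : ℂ) * G t)) := by
    have hz : ∀ t : ℝ, (1 - t * Complex.I : ℂ) ≠ 0 := by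
      intro t h
      have := congrArg Complex.re h
      simp at this
    have hz1 : ∀ t : ℝ, ‖(1 + t * Complex.I) / (1 - t * Complex.I)‖ = 1 := by
      intro t
      rw [norm_div, div_eq_one_iff_eq (norm_ne_zero_iff.2 (hz t))]
      have : (1 - t * Complex.I : ℂ) = (starRingEnd ℂ) (1 + t * Complex.I) := by
        simp; ring
      rw [this, Complex.norm_conj]
    have hr : ∀ᶠ r : ℝ in 𝓝[<] 1, 0 < r ∧ r < 1 := by
      filter_upwards [self_mem_nhdsWithin,
        nhdsWithin_le_nhds (lt_mem_nhds (show (0:ℝ) < 1 by norm_num))] with r h1 h2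
      exact ⟨h2, h1⟩
    have hnr : ∀ r : ℝ, 0 < r → r < 1 → ∀ t : ℝ,
        ‖(r * ((1 + t * Complex.I) / (1 - t * Complex.I)) : ℂ)‖ < 1 := by
      intro r h0 h1 t
      rw [norm_mul, hz1, mul_one, Complex.norm_real, Real.norm_of_nonneg h0.le]
      exact h1
    apply tendsto_integral_filter_of_dominated_convergence (fun t => 2 * M * (1 + t ^ 2)⁻¹)
    · filter_upwards [hr] with r hr
      apply Continuous.aestronglyMeasurable
      apply Continuous.mul
      · apply Complex.continuous_ofReal.comp
        apply Continuous.div (by fun_prop) (by fun_prop)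
        intro t; positivity
      · rw [continuous_iff_continuousAt]
        intro t
        apply ContinuousAt.comp (f := fun t : ℝ =>
          (φ (r * ((1 + t * Complex.I) / (1 - t * Complex.I)))))
        · exact (hd _ (by linarith [him0 _ (hnr r hr.1 hr.2 t).le])).continuousAt
        · rw [hφ]
          have := hz t
          have := hne _ (hnr r hr.1 hr.2 t)
          fun_prop (disch := assumption)
    · filter_upwards [hr] with r hr
      refine Eventually.of_forall fun t => ?_
      rw [norm_mul, Complex.norm_real, Real.norm_of_nonneg (by positivity)]
      have := hb _ (him0 _ (hnr r hr.1 hr.2 t).le)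
      calc _ ≤ 2 / (1 + t ^ 2) * M := by gcongr
        _ = _ := by field_simp
    · exact integrable_inv_one_add_sq.const_mul _
    · refine Eventually.of_forall fun t => ?_
      apply Tendsto.const_mul
      have ht : φ ((1:ℝ) * ((1 + t * Complex.I) / (1 - t * Complex.I))) = t := by
        simp only [hφ]
        have := hz t
        have h2 : (1 + ((1:ℝ):ℂ) * ((1 + t * Complex.I) / (1 - t * Complex.I)) : ℂ) ≠ 0 := by
          have : (1 + ((1:ℝ):ℂ) * ((1 + t * Complex.I) / (1 - t * Complex.I)) : ℂ)
            = 2 / (1 - t * Complex.I) := by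
            push_cast
            field_simp; ring
          rw [this]
          exact div_ne_zero two_ne_zero (hz t)
        rw [div_eq_iff h2]
        push_cast
        have hw : (1 - t * Complex.I : ℂ) * (1 - t * Complex.I)⁻¹ = 1 := mul_inv_cancel₀ this
        linear_combination (-(Complex.I - t)) * hw
          + (-2 * t * (1 - t * Complex.I : ℂ)⁻¹) * Complex.I_sq
      have hc : ContinuousAt (fun r : ℝ => G (φ (r * ((1 + t * Complex.I) / (1 - t * Complex.I)))))
          1 := by
        apply ContinuousAt.comp (f := fun r : ℝ =>
          (φ (r * ((1 + t * Complex.I) / (1 - t * Complex.I)))))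
        · exact (hd _ (by rw [ht]; simpa using hδ)).continuousAt
        · rw [hφ]
          have := hz t
          have h2 : (1 + ((1:ℝ):ℂ) * ((1 + t * Complex.I) / (1 - t * Complex.I)) : ℂ) ≠ 0 := by
            have : (1 + ((1:ℝ):ℂ) * ((1 + t * Complex.I) / (1 - t * Complex.I)) : ℂ)
              = 2 / (1 - t * Complex.I) := by
              push_cast
              field_simp; ring
            rw [this]
            exact div_ne_zero two_ne_zero (hz t)
          fun_prop (disch := assumption)
      have := hc.tendsto
      rw [ht] at this
      exact this.mono_left nhdsWithin_le_nhds
  have hconst : Tendsto (fun r : ℝ => ∫ t : ℝ, ((2 / (1 + t ^ 2) : ℝ) : ℂ) *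
        G (φ (r * ((1 + t * Complex.I) / (1 - t * Complex.I))))) (𝓝[<] 1)
        (𝓝 (2 * Real.pi * G Complex.I)) := by
    apply tendsto_const_nhds.congr'
    filter_upwards [self_mem_nhdsWithin,
        nhdsWithin_le_nhds (lt_mem_nhds (show (0:ℝ) < 1 by norm_num))] with r h1 h2
    exact (hmean r h2 h1).symm
  have := tendsto_nhds_unique hlim hconst
  have e : ∀ t : ℝ, ((2 / (1 + t ^ 2) : ℝ) : ℂ) * G t
      = 2 * (((1 / (1 + t ^ 2) : ℝ) : ℂ) * G t) := by
    intro t; push_cast; ring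
  simp_rw [e] at this
  rw [integral_const_mul] at this
  linear_combination this / 2

/-- Poisson formula at a general point. -/
lemma poisson_gen (G : ℂ → ℂ) (δ : ℝ) (hδ : 0 < δ)
    (hd : ∀ z : ℂ, -δ < z.im → DifferentiableAt ℂ G z) (M : ℝ)
    (hb : ∀ z : ℂ, 0 ≤ z.im → ‖G z‖ ≤ M) (t y : ℝ) (hy : 0 < y) :
    ∫ x : ℝ, ((y / ((x - t) ^ 2 + y ^ 2) : ℝ) : ℂ) * G x = Real.pi * G (t + y * Complex.I) := by
  have h := poisson_i (fun z => G (t + y * z)) (δ / y) (by positivity) (by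
    intro z hz
    have : DifferentiableAt ℂ (fun z : ℂ => (t + y * z : ℂ)) z := by fun_prop
    refine DifferentiableAt.comp z (hd _ ?_) this
    simp
    have := (mul_lt_mul_of_pos_left hz hy)
    have e : y * -(δ / y) = -δ := by field_simp
    linarith) M (by
    intro z hz
    apply hb
    simp
    positivity)
  rw [← h]
  have e := Measure.integral_comp_mul_left
    (fun x : ℝ => ((y / (x ^ 2 + y ^ 2) : ℝ) : ℂ) * G (t + x)) y
  have e2 := integral_add_right_eq_self (μ := volume)
    (fun x : ℝ => ((y / ((x - t) ^ 2 + y ^ 2) : ℝ) : ℂ) * G x) t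
  rw [← e2]
  rw [abs_of_pos (by positivity)] at e
  have e3 : ∀ x : ℝ, ((1 / (1 + x ^ 2) : ℝ) : ℂ) * G (t + y * x)
     = (y : ℂ) * (((y / ((y * x) ^ 2 + y ^ 2) : ℝ) : ℂ) * G (t + (y * x : ℝ))) := by
    intro x
    have : (1 / (1 + x ^ 2) : ℝ) = y * (y / ((y * x) ^ 2 + y ^ 2)) := by
      field_simp; ring
    rw [this]
    push_cast; ring
  simp_rw [e3]
  rw [integral_const_mul, e]
  have hy' : (y : ℂ) ≠ 0 := by exact_mod_cast hy.ne'
  rw [Complex.real_smul]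
  push_cast
  rw [mul_inv_cancel_left₀ hy']
  congr 1
  ext x
  congr 1
  · ring_nf
  · ring_nf


def pk (y s : ℝ) : ℝ := y / (s ^ 2 + y ^ 2)
def qk (y s : ℝ) : ℝ := s / (s ^ 2 + y ^ 2)

lemma pk_nonneg {y : ℝ} (hy : 0 < y) (s : ℝ) : 0 ≤ pk y s := by unfold pk; positivity

lemma pk_le_inv {y : ℝ} (hy : 0 < y) (s : ℝ) : pk y s ≤ 1 / y := by
  unfold pk
  rw [div_le_div_iff₀ (by positivity) hy]
  nlinarith [sq_nonneg s]

lemma pk_le_dyadic {y : ℝ} (hy : 0 < y) (s : ℝ) :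
    ∃ k : ℕ, |s| ≤ 2 ^ k * y ∧ pk y s ≤ 4 / (4 ^ k * y) := by
  have hex : ∃ k : ℕ, |s| ≤ 2 ^ k * y := by
    obtain ⟨k, hk⟩ := pow_unbounded_of_one_lt (|s| / y) (one_lt_two)
    exact ⟨k, by rw [div_lt_iff₀ hy] at hk; exact hk.le⟩
  classical
  refine ⟨Nat.find hex, Nat.find_spec hex, ?_⟩
  rcases h : Nat.find hex with _ | k
  · refine (pk_le_inv hy s).trans ?_
    simp only [pow_zero, one_mul]
    gcongr; norm_num
  · have hk : ¬ |s| ≤ 2 ^ k * y := Nat.find_min hex (by omega)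
    push Not at hk
    have h4 : (4:ℝ) ^ k * y ^ 2 ≤ s ^ 2 := by
      rw [← sq_abs s]
      have : (4:ℝ) ^ k * y ^ 2 = (2 ^ k * y) ^ 2 := by
        rw [mul_pow, ← pow_mul, mul_comm k 2, pow_mul]; norm_num
      rw [this]
      gcongr
    unfold pk
    rw [div_le_div_iff₀ (by positivity) (by positivity), pow_succ]
    nlinarith [sq_nonneg y]

lemma pk_continuous {y : ℝ} (hy : 0 < y) : Continuous (pk y) := by
  unfold pk
  apply Continuous.div (by fun_prop) (by fun_prop)
  intro s; positivity

lemma qk_continuous {y : ℝ} (hy : 0 < y) : Continuous (qk y) := by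
  unfold qk
  apply Continuous.div (by fun_prop) (by fun_prop)
  intro s; positivity

lemma qk_abs_le {y : ℝ} (hy : 0 < y) (s : ℝ) : |qk y s| ≤ 1 / y := by
  unfold qk
  rw [abs_div, abs_of_pos (by positivity : 0 < s ^ 2 + y ^ 2),
    div_le_div_iff₀ (by positivity) hy, ← sq_abs s]
  nlinarith [sq_nonneg (|s| - y), sq_nonneg (|s|)]

lemma qk_neg (y s : ℝ) : qk y (-s) = - qk y s := by unfold qk; rw [neg_sq, neg_div]
lemma pk_neg (y s : ℝ) : pk y (-s) = pk y s := by unfold pk; rw [neg_sq]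

lemma pk_integrable {y : ℝ} (hy : 0 < y) : Integrable (pk y) := by
  have h := (integrable_inv_one_add_sq.comp_mul_left' (R := y⁻¹) (by positivity)).const_mul y⁻¹
  refine h.congr (Eventually.of_forall fun s => ?_)
  simp only [pk]
  field_simp
  ring

lemma pk_integral {y : ℝ} (hy : 0 < y) : ∫ s, pk y s = Real.pi := by
  have h := Measure.integral_comp_mul_left (fun x : ℝ => (1 + x ^ 2)⁻¹) y⁻¹
  rw [integral_univ_inv_one_add_sq, inv_inv, abs_of_pos hy] at h
  have e : ∀ s, pk y s = y⁻¹ * (1 + (y⁻¹ * s) ^ 2)⁻¹ := by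
    intro s
    simp only [pk]
    field_simp
    ring
  simp_rw [e]
  rw [integral_const_mul, h, smul_eq_mul]
  field_simp

lemma pk_integrable_shift {y : ℝ} (hy : 0 < y) (t : ℝ) : Integrable (fun x => pk y (x - t)) :=
  (pk_integrable hy).comp_sub_right t

lemma pk_integral_shift {y : ℝ} (hy : 0 < y) (t : ℝ) : ∫ x, pk y (x - t) = Real.pi := by
  rw [integral_sub_right_eq_self (pk y) t, pk_integral hy]

lemma integrable_mul_pk {E : Type*} [NormedAddCommGroup E] [NormedSpace ℝ E]
    {f : ℝ → E} (hf : Integrable f) {y : ℝ} (hy : 0 < y) (t : ℝ) :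
    Integrable (fun x => pk y (x - t) • f x) := by
  apply hf.bdd_smul (1 / y)
  · exact ((pk_continuous hy).comp (continuous_id.sub continuous_const)).aestronglyMeasurable
  · exact Eventually.of_forall fun x => by
      rw [Real.norm_of_nonneg (pk_nonneg hy _)]; exact pk_le_inv hy _

lemma integrable_mul_qk
    {f : ℝ → ℝ} (hf : Integrable f) {y : ℝ} (hy : 0 < y) (t : ℝ) :
    Integrable (fun x => f x * qk y (x - t)) := by
  apply hf.mul_bdd (c := 1 / y)
  · exact ((qk_continuous hy).comp (continuous_id.sub continuous_const)).aestronglyMeasurable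
  · exact Eventually.of_forall fun x => qk_abs_le hy _

lemma integrable_pk_sub {E : Type*} [NormedAddCommGroup E] [NormedSpace ℝ E]
    {f : ℝ → E} (hf : Integrable f) {y : ℝ} (hy : 0 < y) (t : ℝ) :
    Integrable (fun x => pk y (x - t) * ‖f x - f t‖) := by
  have h1 := (integrable_mul_pk hf hy t)
  have h2 := (pk_integrable_shift hy t).smul_const (f t)
  have h3 := (h1.sub h2).norm
  refine h3.congr (Eventually.of_forall fun x => ?_)
  simp only [Pi.sub_apply]
  rw [← smul_sub, norm_smul, Real.norm_of_nonneg (pk_nonneg hy _)]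

lemma leb_pt {E : Type*} [NormedAddCommGroup E] [NormedSpace ℝ E]
    {f : ℝ → E} (hf : Integrable f) (t : ℝ)
    (ht : Tendsto (fun r => ⨍ x in Metric.closedBall t r, ‖f x - f t‖) (𝓝[>] 0) (𝓝 0)) :
    Tendsto (fun y => ∫ x, pk y (x - t) * ‖f x - f t‖) (𝓝[>] 0) (𝓝 0) := by
  set u : ℝ → ℝ := fun x => ‖f x - f t‖ with hu
  set A : ℝ → ℝ := fun r => ⨍ x in Metric.closedBall t r, ‖f x - f t‖ with hA
  have hu0 : ∀ x, 0 ≤ u x := fun x => norm_nonneg _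
  have huint : ∀ r, IntegrableOn u (Metric.closedBall t r) := by
    intro r
    apply Integrable.norm
    apply Integrable.sub hf.integrableOn
    exact integrableOn_const measure_closedBall_lt_top.ne
  have hA' : ∀ r, 0 < r → ∫ x in Metric.closedBall t r, u x = 2 * r * A r := by
    intro r hr
    have : volume.real (Metric.closedBall t r) = 2 * r := by
      rw [Measure.real, Real.volume_closedBall, ENNReal.toReal_ofReal (by positivity)]
    simp only [hA]
    rw [setAverage_eq, this, smul_eq_mul]
    field_simp
    rfl
  have hA0 : ∀ r, 0 < r → 0 ≤ A r := by
    intro r hr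
    have := hA' r hr
    have h2 : 0 ≤ ∫ x in Metric.closedBall t r, u x := integral_nonneg hu0
    rw [this] at h2
    by_contra hneg
    push Not at hneg
    nlinarith
  obtain ⟨K, hK⟩ : ∃ K, ∀ r, 0 < r → A r ≤ K := by
    have h1 : ∀ᶠ r in 𝓝[>] (0:ℝ), A r < 1 := ht.eventually (gt_mem_nhds one_pos)
    rw [eventually_nhdsWithin_iff, Metric.eventually_nhds_iff] at h1
    obtain ⟨ρ, hρ, h1⟩ := h1
    set N := ∫ x, ‖f x‖ with hN
    have hN0 : 0 ≤ N := integral_nonneg fun x => norm_nonneg _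
    refine ⟨1 + N / (2 * ρ) + ‖f t‖, fun r hr => ?_⟩
    by_cases hrρ : r < ρ
    · have := h1 (y := r) (by simpa [abs_of_pos hr] using hrρ) hr
      have : 0 ≤ N / (2 * ρ) := by positivity
      have := norm_nonneg (f t)
      linarith
    · push Not at hrρ
      have h2 : ∫ x in Metric.closedBall t r, u x ≤ N + 2 * r * ‖f t‖ := by
        calc ∫ x in Metric.closedBall t r, u x
            ≤ ∫ x in Metric.closedBall t r, (‖f x‖ + ‖f t‖) := by
              apply integral_mono (huint r)
              · apply Integrable.add hf.norm.integrableOn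
                exact integrableOn_const measure_closedBall_lt_top.ne
              · intro x; exact norm_sub_le _ _
          _ = (∫ x in Metric.closedBall t r, ‖f x‖) + 2 * r * ‖f t‖ := by
              rw [integral_add hf.norm.integrableOn
                (integrableOn_const measure_closedBall_lt_top.ne)]
              rw [setIntegral_const, Measure.real, Real.volume_closedBall,
                ENNReal.toReal_ofReal (by positivity), smul_eq_mul]
          _ ≤ _ := by
              gcongr
              exact setIntegral_le_integral hf.norm (Eventually.of_forall fun x => norm_nonneg _)
      rw [hA' r hr] at h2
      have h3 : A r ≤ N / (2 * r) + ‖f t‖ := by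
        have : A r = (2 * r * A r) / (2 * r) := by field_simp
        rw [this, div_le_iff₀ (by positivity)]
        have : (N / (2 * r) + ‖f t‖) * (2 * r) = N + 2 * r * ‖f t‖ := by field_simp
        linarith
      have : N / (2 * r) ≤ N / (2 * ρ) := by gcongr
      linarith
  have hbd : ∀ y, 0 < y → ∫ x, pk y (x - t) * u x ≤ ∑' k : ℕ, 8 * (1 / 2) ^ k * A (2 ^ k * y) := by
    intro y hy
    have hs : Summable fun k : ℕ => 8 * (1 / 2 : ℝ) ^ k * A (2 ^ k * y) := by
      apply Summable.of_nonneg_of_le (f := fun k : ℕ => 8 * (1 / 2 : ℝ) ^ k * K)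
      · intro k; have := hA0 (2 ^ k * y) (by positivity); positivity
      · intro k; have := hK (2 ^ k * y) (by positivity); gcongr
      · exact (summable_geometric_two.mul_left 8).mul_right K
    rw [integral_eq_lintegral_of_nonneg_ae
      (Eventually.of_forall fun x => mul_nonneg (pk_nonneg hy _) (hu0 _))
      (integrable_pk_sub hf hy t).aestronglyMeasurable]
    apply ENNReal.toReal_le_of_le_ofReal
    · exact tsum_nonneg fun k => by have := hA0 (2 ^ k * y) (by positivity); positivity
    have hmu : AEMeasurable (fun x => ENNReal.ofReal (u x)) := by
      apply AEMeasurable.ennreal_ofReal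
      exact ((hf.aestronglyMeasurable.sub aestronglyMeasurable_const).norm).aemeasurable
    calc ∫⁻ x, ENNReal.ofReal (pk y (x - t) * u x)
        ≤ ∫⁻ x, ∑' k : ℕ, (Metric.closedBall t (2 ^ k * y)).indicator
            (fun x => ENNReal.ofReal (4 / (4 ^ k * y)) * ENNReal.ofReal (u x)) x := by
          apply lintegral_mono
          intro x
          obtain ⟨k, hk1, hk2⟩ := pk_le_dyadic hy (x - t)
          refine le_trans ?_ (ENNReal.le_tsum k)
          rw [indicator_of_mem (by rw [Metric.mem_closedBall, Real.dist_eq]; exact hk1),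
            ← ENNReal.ofReal_mul (by positivity)]
          apply ENNReal.ofReal_le_ofReal
          exact mul_le_mul_of_nonneg_right hk2 (hu0 _)
      _ = ∑' k : ℕ, ∫⁻ x, (Metric.closedBall t (2 ^ k * y)).indicator
            (fun x => ENNReal.ofReal (4 / (4 ^ k * y)) * ENNReal.ofReal (u x)) x := by
          apply lintegral_tsum
          intro k
          exact (hmu.const_mul _).indicator Metric.isClosed_closedBall.measurableSet
      _ = ∑' k : ℕ, ENNReal.ofReal (8 * (1 / 2) ^ k * A (2 ^ k * y)) := by
          congr 1
          ext k
          rw [lintegral_indicator Metric.isClosed_closedBall.measurableSet,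
            lintegral_const_mul'' _ hmu.restrict,
            ← ofReal_integral_eq_lintegral_ofReal (huint _) (Eventually.of_forall hu0),
            hA' _ (by positivity), ← ENNReal.ofReal_mul (by positivity)]
          congr 1
          have : (4:ℝ) ^ k = 2 ^ k * 2 ^ k := by rw [← mul_pow]; norm_num
          rw [this, one_div, inv_pow]
          field_simp
          ring
      _ = _ := by
          rw [ENNReal.ofReal_tsum_of_nonneg _ hs]
          intro k; have := hA0 (2 ^ k * y) (by positivity); positivity
  have hlim : Tendsto (fun y => ∑' k : ℕ, 8 * (1 / 2 : ℝ) ^ k * A (2 ^ k * y)) (𝓝[>] 0)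
      (𝓝 (∑' k : ℕ, (0:ℝ))) := by
    apply tendsto_tsum_of_dominated_convergence (bound := fun k : ℕ => 8 * (1 / 2 : ℝ) ^ k * K)
    · exact (summable_geometric_two.mul_left 8).mul_right K
    · intro k
      have h1 : Tendsto (fun y : ℝ => 2 ^ k * y) (𝓝[>] 0) (𝓝[>] 0) := by
        apply tendsto_nhdsWithin_iff.2
        constructor
        · have : Tendsto (fun y : ℝ => 2 ^ k * y) (𝓝 0) (𝓝 (2 ^ k * 0)) := by
            exact (continuous_const.mul continuous_id).tendsto 0
          rw [mul_zero] at this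
          exact this.mono_left nhdsWithin_le_nhds
        · filter_upwards [self_mem_nhdsWithin] with y hy
          have : (0:ℝ) < y := hy
          simp only [mem_Ioi]; positivity
      have := (ht.comp h1).const_mul (8 * (1 / 2 : ℝ) ^ k)
      rw [mul_zero] at this
      exact this
    · filter_upwards [self_mem_nhdsWithin] with y hy k
      have : (0:ℝ) < y := hy
      have h1 := hA0 (2 ^ k * y) (by positivity)
      have h2 := hK (2 ^ k * y) (by positivity)
      rw [Real.norm_of_nonneg (by positivity)]
      gcongr
  rw [tsum_zero] at hlim
  apply squeeze_zero' _ _ hlim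
  · filter_upwards [self_mem_nhdsWithin] with y hy
    exact integral_nonneg fun x => mul_nonneg (pk_nonneg hy _) (hu0 _)
  · filter_upwards [self_mem_nhdsWithin] with y hy
    exact hbd y hy

lemma leb_ae {E : Type*} [NormedAddCommGroup E] [NormedSpace ℝ E]
    {f : ℝ → E} (hf : Integrable f) :
    ∀ᵐ t : ℝ, Tendsto (fun y => ∫ x, pk y (x - t) * ‖f x - f t‖) (𝓝[>] 0) (𝓝 0) := by
  filter_upwards [IsUnifLocDoublingMeasure.ae_tendsto_average_norm_sub (μ := volume)
    hf.locallyIntegrable 1] with t ht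
  apply leb_pt hf t
  apply ht (fun _ => t) (fun r => r) tendsto_id
  filter_upwards [self_mem_nhdsWithin] with r hr
  have : (0:ℝ) < r := hr
  exact Metric.mem_closedBall_self (by linarith)

/-- Poisson integrals converge a.e. -/
lemma poisson_ae {E : Type*} [NormedAddCommGroup E] [NormedSpace ℝ E] [CompleteSpace E]
    {f : ℝ → E} (hf : Integrable f) :
    ∀ᵐ t : ℝ, Tendsto (fun y => ∫ x, pk y (x - t) • f x) (𝓝[>] 0) (𝓝 (Real.pi • f t)) := by
  filter_upwards [leb_ae hf] with t ht
  rw [tendsto_iff_norm_sub_tendsto_zero]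
  apply squeeze_zero' (Eventually.of_forall fun _ => norm_nonneg _) _ ht
  filter_upwards [self_mem_nhdsWithin] with y hy
  have hy : 0 < y := hy
  rw [← pk_integral_shift hy t, ← integral_smul_const, ← integral_sub (integrable_mul_pk hf hy t)
    ((pk_integrable_shift hy t).smul_const _)]
  refine (norm_integral_le_integral_norm _).trans (le_of_eq ?_)
  congr 1
  ext x
  rw [← smul_sub, norm_smul, Real.norm_of_nonneg (pk_nonneg hy _)]

def Qf (f : ℝ → ℝ) (y t : ℝ) : ℝ := ∫ x, f x * qk y (x - t)
def Tf (f : ℝ → ℝ) (e t : ℝ) : ℝ := ∫ x in {x : ℝ | e ≤ |x - t|}, f x / (x - t)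

lemma kdiff_le {y : ℝ} (hy : 0 < y) (s : ℝ) :
    |({s : ℝ | y ≤ |s|}.indicator (fun s => 1 / s) s) - qk y s| ≤ pk y s := by
  have hp : 0 < s ^ 2 + y ^ 2 := by positivity
  by_cases h : y ≤ |s|
  · rw [indicator_of_mem (by exact h)]
    have hs : s ≠ 0 := by
      rintro rfl; simp at h; linarith
    have e : 1 / s - qk y s = y ^ 2 / (s * (s ^ 2 + y ^ 2)) := by
      unfold qk; field_simp; ring
    rw [e, abs_div, abs_mul, abs_of_pos hp, abs_of_pos (by positivity : 0 < y ^ 2)]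
    unfold pk
    have : 0 < |s| := by positivity
    rw [div_le_div_iff₀ (by positivity) hp]
    nlinarith [mul_le_mul_of_nonneg_left h (by positivity : 0 ≤ y * (s ^ 2 + y ^ 2))]
  · rw [indicator_of_notMem (by exact h), zero_sub, abs_neg]
    push Not at h
    unfold qk pk
    rw [abs_div, abs_of_pos hp]
    gcongr

lemma T_sub_Q {f : ℝ → ℝ} (hf : Integrable f) :
    ∀ᵐ t : ℝ, Tendsto (fun y => Tf f y t - Qf f y t) (𝓝[>] 0) (𝓝 0) := by
  filter_upwards [leb_ae hf] with t ht
  apply squeeze_zero_norm' _ ht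
  filter_upwards [self_mem_nhdsWithin] with y hy
  have hy : 0 < y := hy
  set k : ℝ → ℝ := fun s => ({s : ℝ | y ≤ |s|}.indicator (fun s => 1 / s) s) - qk y s with hk
  have hms : MeasurableSet {s : ℝ | y ≤ |s|} :=
    measurableSet_le measurable_const measurable_id.abs
  have hkm : Measurable k := by
    apply Measurable.sub
    · exact (measurable_const.div measurable_id).indicator hms
    · exact (qk_continuous hy).measurable
  have hkint : Integrable k := by
    apply (pk_integrable hy).mono' hkm.aestronglyMeasurable
    exact Eventually.of_forall fun s => kdiff_le hy s
  have hk0 : ∫ s, k s = 0 := by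
    have h1 : ∫ s, k (-s) = ∫ s, k s := integral_neg_eq_self k volume
    have h2 : ∀ s, k (-s) = - k s := by
      intro s
      simp only [hk, qk_neg]
      by_cases h : y ≤ |s|
      · rw [indicator_of_mem (by simpa using h), indicator_of_mem (by exact h)]
        ring
      · rw [indicator_of_notMem (by simpa using h), indicator_of_notMem (by exact h)]
        ring
    simp_rw [h2] at h1
    rw [integral_neg] at h1
    linarith
  have hkint' : Integrable (fun x => k (x - t)) := hkint.comp_sub_right t
  have hmt : MeasurableSet {x : ℝ | y ≤ |x - t|} :=
    measurableSet_le measurable_const (measurable_id.sub_const t).abs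
  have hfk : Integrable (fun x => f x * k (x - t)) := by
    apply hf.mul_bdd (c := 1 / y)
    · exact (hkm.comp (measurable_id.sub_const t)).aestronglyMeasurable
    · exact Eventually.of_forall fun x => (kdiff_le hy _).trans (pk_le_inv hy _)
  have e1 : Tf f y t - Qf f y t = ∫ x, f x * k (x - t) := by
    have hTi : ∀ x, {x : ℝ | y ≤ |x - t|}.indicator (fun x => f x / (x - t)) x
        = f x * k (x - t) + f x * qk y (x - t) := by
      intro x
      simp only [hk]
      by_cases h : y ≤ |x - t|
      · rw [indicator_of_mem (by exact h), indicator_of_mem (by exact h)]; ring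
      · rw [indicator_of_notMem (by exact h), indicator_of_notMem (by exact h)]; ring
    unfold Tf Qf
    rw [← integral_indicator hmt]
    simp_rw [hTi]
    rw [integral_add hfk (integrable_mul_qk hf hy t)]
    ring
  have e2 : ∫ x, f x * k (x - t) = ∫ x, (f x - f t) * k (x - t) := by
    simp_rw [sub_mul]
    rw [integral_sub hfk (hkint'.const_mul _), integral_const_mul,
      integral_sub_right_eq_self k t, hk0]
    ring
  rw [e1, e2]
  refine norm_integral_le_of_norm_le (integrable_pk_sub hf hy t)
    (Eventually.of_forall fun x => ?_)
  rw [norm_mul, mul_comm]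
  exact mul_le_mul_of_nonneg_right (kdiff_le hy _) (norm_nonneg _)


def CF (f : ℝ → ℝ) (z : ℂ) : ℂ := ∫ x : ℝ, (f x : ℂ) / ((x : ℂ) - z)
def Pf (f : ℝ → ℝ) (y t : ℝ) : ℝ := ∫ x, f x * pk y (x - t)

lemma im_le_norm_sub (x : ℝ) (z : ℂ) : z.im ≤ ‖(x : ℂ) - z‖ := by
  have := Complex.abs_im_le_norm ((x : ℂ) - z)
  simp at this
  exact (le_abs_self _).trans this

lemma sub_ne (x : ℝ) {z : ℂ} (hz : 0 < z.im) : (x : ℂ) - z ≠ 0 := by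
  rw [← norm_pos_iff]
  exact hz.trans_le (im_le_norm_sub x z)

lemma CF_meas {f : ℝ → ℝ} (hf : AEStronglyMeasurable f) (z : ℂ) :
    AEStronglyMeasurable (fun x : ℝ => (f x : ℂ) / ((x : ℂ) - z)) := by
  have h1 : AEMeasurable (fun x : ℝ => (f x : ℂ)) :=
    Complex.measurable_ofReal.comp_aemeasurable hf.aemeasurable
  exact (h1.div (by fun_prop)).aestronglyMeasurable

lemma CF_norm_le (f : ℝ → ℝ) {z : ℂ} {c : ℝ} (hc : 0 < c) (hz : c ≤ z.im) (x : ℝ) :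
    ‖(f x : ℂ) / ((x : ℂ) - z)‖ ≤ |f x| / c := by
  rw [norm_div, Complex.norm_real, Real.norm_eq_abs]
  have := im_le_norm_sub x z
  gcongr
  linarith

lemma CF_integrable {f : ℝ → ℝ} (hf : Integrable f) {z : ℂ} (hz : 0 < z.im) :
    Integrable (fun x : ℝ => (f x : ℂ) / ((x : ℂ) - z)) :=
  (hf.abs.div_const z.im).mono' (CF_meas hf.1 z)
    (Eventually.of_forall fun x => CF_norm_le f hz le_rfl x)

lemma CF_bound {f : ℝ → ℝ} (hf : Integrable f) {z : ℂ} (hz : 0 < z.im) :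
    ‖CF f z‖ ≤ (∫ x, |f x|) / z.im := by
  rw [← integral_div]
  exact norm_integral_le_of_norm_le (hf.abs.div_const _)
    (Eventually.of_forall fun x => CF_norm_le f hz le_rfl x)

lemma CF_diff {f : ℝ → ℝ} (hf : Integrable f) {z : ℂ} (hz : 0 < z.im) :
    DifferentiableAt ℂ (CF f) z := by
  have hball : ∀ w ∈ Metric.ball z (z.im / 2), z.im / 2 ≤ w.im := by
    intro w hw
    have h1 := Complex.abs_im_le_norm (w - z)
    rw [Metric.mem_ball, dist_eq_norm] at hw
    have := (abs_lt.1 (h1.trans_lt hw)).1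
    simp at this
    linarith
  have := hasDerivAt_integral_of_dominated_loc_of_deriv_le (μ := volume) (𝕜 := ℂ)
    (F := fun z x => (f x : ℂ) / ((x : ℂ) - z))
    (F' := fun z x => (f x : ℂ) / ((x : ℂ) - z) ^ 2) (x₀ := z)
    (bound := fun x => |f x| / (z.im / 2) ^ 2) (s := Metric.ball z (z.im / 2))
    (Metric.ball_mem_nhds z (by positivity))
    (Eventually.of_forall fun w => CF_meas hf.1 w) (CF_integrable hf hz)
    (by
      have h1 : AEMeasurable (fun x : ℝ => (f x : ℂ)) :=
        Complex.measurable_ofReal.comp_aemeasurable hf.1.aemeasurable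
      exact (h1.div (by fun_prop)).aestronglyMeasurable)
    (by
      refine Eventually.of_forall fun x w hw => ?_
      rw [norm_div, Complex.norm_real, Real.norm_eq_abs, norm_pow]
      have := im_le_norm_sub x w
      have := hball w hw
      gcongr
      linarith)
    (hf.abs.div_const _)
    (by
      refine Eventually.of_forall fun x w hw => ?_
      have hne : (x : ℂ) - w ≠ 0 := sub_ne x (by linarith [hball w hw])
      have h1 : HasDerivAt (fun w : ℂ => (x : ℂ) - w) (-1) w := by
        simpa using (hasDerivAt_id w).const_sub (x : ℂ)
      have h2 := (hasDerivAt_const w (f x : ℂ)).div h1 hne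
      exact h2.congr_deriv (by ring))
  exact this.2.differentiableAt

lemma CF_split {f : ℝ → ℝ} {y : ℝ} (hy : 0 < y) (t x : ℝ) :
    (f x : ℂ) / ((x : ℂ) - (t + y * Complex.I))
      = ((f x * qk y (x - t) : ℝ) : ℂ) + ((f x * pk y (x - t) : ℝ) : ℂ) * Complex.I := by
  have h := sub_ne x (z := (t + y * Complex.I)) (by simpa using hy)
  rw [div_eq_iff h]
  have hp : ((x - t) ^ 2 + y ^ 2 : ℝ) ≠ 0 := by positivity
  have e : (f x : ℂ) = ((f x / ((x - t) ^ 2 + y ^ 2) : ℝ) : ℂ)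
    * (((x - t) ^ 2 + y ^ 2 : ℝ) : ℂ) := by
    rw [← Complex.ofReal_mul]; congr 1; field_simp
  have e1 : f x * qk y (x - t) = (f x / ((x - t) ^ 2 + y ^ 2)) * (x - t) := by
    unfold qk; ring
  have e2 : f x * pk y (x - t) = (f x / ((x - t) ^ 2 + y ^ 2)) * y := by
    unfold pk; ring
  rw [e1, e2]
  conv_lhs => rw [e]
  generalize (f x / ((x - t) ^ 2 + y ^ 2)) = A
  push_cast
  linear_combination (A : ℂ) * y ^ 2 * Complex.I_sq

lemma integrable_mul_pk' {f : ℝ → ℝ} (hf : Integrable f) {y : ℝ} (hy : 0 < y) (t : ℝ) :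
    Integrable (fun x => f x * pk y (x - t)) := by
  refine (integrable_mul_pk hf hy t).congr (Eventually.of_forall fun x => ?_)
  simp [mul_comm]

lemma CF_eq {f : ℝ → ℝ} (hf : Integrable f) {y : ℝ} (hy : 0 < y) (t : ℝ) :
    CF f (t + y * Complex.I) = (Qf f y t : ℂ) + (Pf f y t : ℂ) * Complex.I := by
  unfold CF
  simp_rw [CF_split hy]
  rw [integral_add (integrable_mul_qk hf hy t).ofReal
    ((integrable_mul_pk' hf hy t).ofReal.mul_const _), integral_mul_const,
    integral_complex_ofReal, integral_complex_ofReal]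
  rfl

lemma CF_cont {f : ℝ → ℝ} (hf : Integrable f) {y : ℝ} (hy : 0 < y) :
    Continuous (fun t : ℝ => CF f (t + y * Complex.I)) := by
  rw [continuous_iff_continuousAt]
  intro t
  apply ContinuousAt.comp (f := fun t : ℝ => (t + y * Complex.I : ℂ)) (g := CF f)
  · exact (CF_diff hf (by simpa using hy)).continuousAt
  · fun_prop

lemma Qf_cont {f : ℝ → ℝ} (hf : Integrable f) {y : ℝ} (hy : 0 < y) : Continuous (Qf f y) := by
  have := Complex.continuous_re.comp (CF_cont hf hy)
  refine this.congr fun t => ?_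
  simp [CF_eq hf hy]

lemma Pf_cont {f : ℝ → ℝ} (hf : Integrable f) {y : ℝ} (hy : 0 < y) : Continuous (Pf f y) := by
  have := Complex.continuous_im.comp (CF_cont hf hy)
  refine this.congr fun t => ?_
  simp [CF_eq hf hy]

lemma Qf_swap {f g : ℝ → ℝ} (hf : Integrable f) (hg : Integrable g) {y : ℝ} (hy : 0 < y) :
    ∫ t, g t * Qf f y t = - ∫ x, f x * Qf g y x := by
  have hint : Integrable (fun p : ℝ × ℝ => g p.1 * f p.2 * qk y (p.2 - p.1))
      (volume.prod volume) := by
    apply (hg.mul_prod hf).mul_bdd (c := 1 / y)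
    · exact ((qk_continuous hy).comp (continuous_snd.sub continuous_fst)).aestronglyMeasurable
    · exact Eventually.of_forall fun p => qk_abs_le hy _
  have h := integral_integral_swap (f := fun t x => g t * f x * qk y (x - t)) hint
  unfold Qf
  simp_rw [← integral_const_mul, ← mul_assoc]
  rw [h, ← integral_neg]
  congr 1
  ext x
  rw [← integral_neg]
  congr 1
  ext t
  rw [← neg_sub t x, qk_neg]
  ring

lemma Pf_abs_integrable {f : ℝ → ℝ} (hf : Integrable f) {y : ℝ} (hy : 0 < y) :
    Integrable (fun t => |Pf f y t|) ∧ ∫ t, |Pf f y t| ≤ Real.pi * ∫ x, |f x| := by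
  have hint : Integrable (fun p : ℝ × ℝ => f p.2 * pk y (p.2 - p.1)) (volume.prod volume) := by
    have := hf.convolution_integrand (ContinuousLinearMap.mul ℝ ℝ) (pk_integrable hy) (μ := volume)
    refine this.congr (Eventually.of_forall fun p => ?_)
    simp only [ContinuousLinearMap.mul_apply']
    rw [← neg_sub p.1 p.2, pk_neg]
  have h1 : Integrable (fun t => Pf f y t) := hint.integral_prod_left
  refine ⟨h1.abs, ?_⟩
  have h2 : Integrable (fun p : ℝ × ℝ => |f p.2| * pk y (p.2 - p.1)) (volume.prod volume) := by
    refine hint.norm.congr (Eventually.of_forall fun p => ?_)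
    simp only [norm_mul, Real.norm_eq_abs, abs_of_nonneg (pk_nonneg hy _)]
  calc ∫ t, |Pf f y t| ≤ ∫ t, ∫ x, |f x| * pk y (x - t) := by
        apply integral_mono h1.abs h2.integral_prod_left
        intro t
        refine (abs_integral_le_integral_abs).trans (le_of_eq ?_)
        congr 1; ext x
        rw [abs_mul, abs_of_nonneg (pk_nonneg hy _)]
    _ = ∫ x, ∫ t, |f x| * pk y (x - t) := integral_integral_swap h2
    _ = ∫ x, |f x| * Real.pi := by
        congr 1; ext x
        rw [integral_const_mul]
        congr 1
        rw [← pk_integral_shift hy x]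
        congr 1; ext t
        rw [← neg_sub t x, pk_neg]
    _ = _ := by rw [integral_mul_const, mul_comm]

lemma Pf_le_pi {h : ℝ → ℝ} (hh : Integrable h) (hb : ∀ x, |h x| ≤ 1) {y : ℝ} (hy : 0 < y) (t : ℝ) :
    |Pf h y t| ≤ Real.pi := by
  rw [← pk_integral_shift hy t]
  show ‖∫ x, h x * pk y (x - t)‖ ≤ _
  refine norm_integral_le_of_norm_le (pk_integrable_shift hy t) (Eventually.of_forall fun x => ?_)
  rw [norm_mul, Real.norm_eq_abs, Real.norm_of_nonneg (pk_nonneg hy _)]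
  have := hb x
  have := pk_nonneg hy (x - t)
  nlinarith

lemma norm_cosh_le (z : ℂ) : ‖Complex.cosh z‖ ≤ Real.exp ‖z‖ := by
  rw [Complex.cosh, norm_div]
  have h1 := norm_add_le (Complex.exp z) (Complex.exp (-z))
  have h2 := Complex.norm_exp_le_exp_norm z
  have h3 := Complex.norm_exp_le_exp_norm (-z)
  rw [norm_neg] at h3
  simp only [Complex.norm_ofNat]
  linarith

lemma cosh_Q_bound {h : ℝ → ℝ} (hh : Integrable h) (hb : ∀ x, |h x| ≤ 1)
    (h2 : ∫ x, |h x| ≤ 2) {y : ℝ} (hy : 0 < y) :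
    ∫ t in Ioo (-1 : ℝ) 1, (Real.cosh (Qf h y t / Real.pi) - 1) ≤ 6 * ∫ x, |h x| := by
  set e := ∫ x, |h x| with he
  have he0 : 0 ≤ e := integral_nonneg fun x => abs_nonneg _
  have hpi := Real.pi_pos
  have hpi3 := Real.pi_gt_three
  set Φ : ℂ → ℂ := fun z => Complex.cosh (CF h (z + y * Complex.I) / Real.pi) with hΦ
  have hd : ∀ z : ℂ, -y < z.im → DifferentiableAt ℂ Φ z := by
    intro z hz
    have h1 : DifferentiableAt ℂ (CF h) (z + y * Complex.I) := CF_diff hh (by simp; linarith)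
    have h2 : DifferentiableAt ℂ (fun z : ℂ => CF h (z + y * Complex.I)) z :=
      DifferentiableAt.comp (g := CF h) (f := fun z : ℂ => z + y * Complex.I) z h1 (by fun_prop)
    exact (h2.div_const _).ccosh
  have hbd : ∀ z : ℂ, 0 ≤ z.im → ‖Φ z‖ ≤ Real.exp (e / y / Real.pi) := by
    intro z hz
    refine (norm_cosh_le _).trans ?_
    rw [norm_div, Complex.norm_real, Real.norm_of_nonneg hpi.le]
    have := CF_bound hh (z := z + y * Complex.I) (by simp; linarith)
    gcongr
    refine this.trans ?_
    gcongr
    simp; linarith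
  have hP := poisson_i Φ y hy hd _ hbd
  have hΦt : ∀ t : ℝ, (Φ t).re
      = Real.cosh (Qf h y t / Real.pi) * Real.cos (Pf h y t / Real.pi) := by
    intro t
    simp only [hΦ]
    rw [CF_eq hh hy]
    have : ((Qf h y t : ℂ) + (Pf h y t : ℂ) * Complex.I) / (Real.pi : ℂ)
      = ((Qf h y t / Real.pi : ℝ) : ℂ) + ((Pf h y t / Real.pi : ℝ) : ℂ) * Complex.I := by
      push_cast; ring
    rw [this, Complex.cosh_add, Complex.cosh_mul_I, Complex.sinh_mul_I]
    rw [← Complex.ofReal_cosh, ← Complex.ofReal_cos, ← Complex.ofReal_sinh, ← Complex.ofReal_sin]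
    simp [-Complex.ofReal_cosh, -Complex.ofReal_cos, -Complex.ofReal_sinh, -Complex.ofReal_sin]
  have hΦint : Integrable (fun t : ℝ => ((1 / (1 + t ^ 2) : ℝ) : ℂ) * Φ t) := by
    have h1 : Integrable (fun t : ℝ => ((1 / (1 + t ^ 2) : ℝ) : ℂ)) := by
      simp_rw [one_div]; exact integrable_inv_one_add_sq.ofReal
    apply h1.mul_bdd (c := Real.exp (e / y / Real.pi))
    · apply Continuous.aestronglyMeasurable
      rw [continuous_iff_continuousAt]
      intro t
      apply ContinuousAt.comp (f := fun t : ℝ => (t : ℂ)) (g := Φ)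
      · exact (hd _ (by simpa using hy)).continuousAt
      · exact Complex.continuous_ofReal.continuousAt
    · exact Eventually.of_forall fun t => hbd _ (by simp)
  have hwint : Integrable (fun t : ℝ => 1 / (1 + t ^ 2)) := by
    simp_rw [one_div]; exact integrable_inv_one_add_sq
  have hre : ∀ t : ℝ, (((1 / (1 + t ^ 2) : ℝ) : ℂ) * Φ t).re
      = 1 / (1 + t ^ 2) * (Real.cosh (Qf h y t / Real.pi) * Real.cos (Pf h y t / Real.pi)) := by
    intro t
    rw [Complex.re_ofReal_mul, hΦt]
  have hRint : Integrable (fun t : ℝ =>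
      1 / (1 + t ^ 2) * (Real.cosh (Qf h y t / Real.pi) * Real.cos (Pf h y t / Real.pi))) := by
    refine hΦint.re.congr (Eventually.of_forall fun t => ?_)
    exact hre t
  have hReq : ∫ t : ℝ, 1 / (1 + t ^ 2) *
      (Real.cosh (Qf h y t / Real.pi) * Real.cos (Pf h y t / Real.pi))
      = Real.pi * (Φ Complex.I).re := by
    have h1 := integral_re hΦint
    rw [hP] at h1
    have h3 : (RCLike.re ((Real.pi : ℂ) * Φ Complex.I) : ℝ) = Real.pi * (Φ Complex.I).re := by
      exact Complex.re_ofReal_mul _ _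
    rw [← h3, ← h1]
    congr 1; ext t
    exact (hre t).symm
  have hΦI : (Φ Complex.I).re ≤ 1 + e / Real.pi := by
    set ζ := CF h (Complex.I + y * Complex.I) / Real.pi with hζ
    have hζn : ‖ζ‖ ≤ e / Real.pi := by
      rw [hζ, norm_div, Complex.norm_real, Real.norm_of_nonneg hpi.le]
      have := CF_bound hh (z := Complex.I + y * Complex.I) (by simp; linarith)
      gcongr
      refine this.trans ?_
      apply div_le_self he0
      simp; linarith
    have h1 : (Φ Complex.I).re = Real.cosh ζ.re * Real.cos ζ.im := by
      simp only [hΦ]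
      rw [← hζ]
      conv_lhs => rw [← Complex.re_add_im ζ]
      rw [Complex.cosh_add, Complex.cosh_mul_I, Complex.sinh_mul_I]
      rw [← Complex.ofReal_cosh, ← Complex.ofReal_cos, ← Complex.ofReal_sinh, ← Complex.ofReal_sin]
      simp [-Complex.ofReal_cosh, -Complex.ofReal_cos, -Complex.ofReal_sinh, -Complex.ofReal_sin]
    have h3 : |ζ.re| ≤ e / Real.pi := (Complex.abs_re_le_norm ζ).trans hζn
    have h4 : e / Real.pi ≤ 1 := by rw [div_le_one hpi]; linarith
    have h5 := Real.cosh_le_exp_half_sq ζ.re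
    have h6 : ζ.re ^ 2 ≤ e / Real.pi := by
      rw [← sq_abs]; nlinarith [abs_nonneg ζ.re]
    have h7 := Real.abs_exp_sub_one_le (x := ζ.re ^ 2 / 2)
      (by rw [abs_of_nonneg (by positivity)]; linarith)
    rw [abs_of_nonneg (by positivity : 0 ≤ ζ.re ^ 2 / 2)] at h7
    have h8 := le_of_abs_le h7
    have h9 : Real.cosh ζ.re * Real.cos ζ.im ≤ Real.cosh ζ.re := by
      have := Real.cos_le_one ζ.im
      have := Real.cosh_pos ζ.re
      nlinarith
    rw [h1]
    linarith
  obtain ⟨hPi, hPb⟩ := Pf_abs_integrable hh hy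
  have hcoshc : Continuous (fun t => Real.cosh (Qf h y t / Real.pi) - 1) :=
    (Real.continuous_cosh.comp ((Qf_cont hh hy).div_const _)).sub continuous_const
  have hLint : IntegrableOn (fun t => (1 / 4) * (Real.cosh (Qf h y t / Real.pi) - 1))
      (Ioo (-1:ℝ) 1) :=
    ((continuous_const.mul hcoshc).continuousOn.integrableOn_Icc).mono_set Ioo_subset_Icc_self
  have hmain : ∫ t in Ioo (-1:ℝ) 1, (1 / 4) * (Real.cosh (Qf h y t / Real.pi) - 1)
      ≤ ∫ t : ℝ, (1 / (1 + t ^ 2) *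
        (Real.cosh (Qf h y t / Real.pi) * Real.cos (Pf h y t / Real.pi)) - 1 / (1 + t ^ 2)
        + |Pf h y t| / (2 * Real.pi)) := by
    rw [← integral_indicator measurableSet_Ioo]
    apply integral_mono
    · exact hLint.integrable_indicator measurableSet_Ioo
    · exact (hRint.sub hwint).add (hPi.div_const _)
    · intro t
      have hw0 : 0 < 1 / (1 + t ^ 2) := by positivity
      have hw1 : 1 / (1 + t ^ 2) ≤ 1 := by
        rw [div_le_one (by positivity)]; nlinarith [sq_nonneg t]
      have hp1 : |Pf h y t / Real.pi| ≤ 1 := by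
        rw [abs_div, abs_of_pos hpi, div_le_one hpi]; exact Pf_le_pi hh hb hy t
      have hc := Real.one_sub_sq_div_two_le_cos (x := Pf h y t / Real.pi)
      have hsq : (Pf h y t / Real.pi) ^ 2 ≤ |Pf h y t / Real.pi| := by
        rw [← sq_abs]; nlinarith [abs_nonneg (Pf h y t / Real.pi)]
      have habs : |Pf h y t| / (2 * Real.pi) = |Pf h y t / Real.pi| / 2 := by
        rw [abs_div, abs_of_pos hpi]; field_simp
      have hch := Real.one_le_cosh (Qf h y t / Real.pi)
      simp only
      rw [habs]
      set C := Real.cosh (Qf h y t / Real.pi)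
      set c := Real.cos (Pf h y t / Real.pi)
      set p := |Pf h y t / Real.pi|
      set w := 1 / (1 + t ^ 2) with hw
      have hp0 : 0 ≤ p := abs_nonneg _
      have hc1 : 1 / 2 ≤ c := by linarith
      have key : w * ((C - 1) * c) ≤ w * (C * c) - w + p / 2 := by
        have : w * (1 - c) ≤ p / 2 := by
          have hcle : c ≤ 1 := Real.cos_le_one _
          nlinarith
        nlinarith
      refine le_trans ?_ key
      by_cases ht : t ∈ Ioo (-1:ℝ) 1
      · rw [indicator_of_mem ht]
        have hw2 : 1 / 2 ≤ w := by
          rw [hw]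
          apply one_div_le_one_div_of_le (by positivity)
          nlinarith [ht.1, ht.2]
        have : 1 / 4 ≤ w * c := by nlinarith
        calc 1 / 4 * (C - 1) ≤ (w * c) * (C - 1) := by gcongr
          _ = _ := by ring
      · rw [indicator_of_notMem ht]
        have : 0 ≤ C - 1 := by linarith
        positivity
  have hRw : Integrable (fun t : ℝ => 1 / (1 + t ^ 2) *
      (Real.cosh (Qf h y t / Real.pi) * Real.cos (Pf h y t / Real.pi)) - 1 / (1 + t ^ 2)) :=
    hRint.sub hwint
  rw [integral_add hRw (hPi.div_const _), integral_sub hRint hwint, hReq,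
    integral_const_mul, integral_div] at hmain
  have hw : ∫ t : ℝ, 1 / (1 + t ^ 2) = Real.pi := by
    simp_rw [one_div]; exact integral_univ_inv_one_add_sq
  rw [hw] at hmain
  have h10 : Real.pi * (Φ Complex.I).re ≤ Real.pi + e := by
    calc _ ≤ Real.pi * (1 + e / Real.pi) := by gcongr
      _ = _ := by field_simp
  have h11 : (∫ t, |Pf h y t|) / (2 * Real.pi) ≤ e / 2 := by
    rw [div_le_iff₀ (by positivity)]
    linarith
  linarith


def lgp (a : ℝ) : ℝ := |a| * max (Real.log |a|) 0

structure RL (f : ℝ → ℝ) : Prop where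
  int : Integrable f
  off : ∀ x, x ∉ Ioo (-1 : ℝ) 1 → f x = 0
  llog : Integrable (fun x => lgp (f x))

lemma lgp_nonneg (a : ℝ) : 0 ≤ lgp a := mul_nonneg (abs_nonneg _) (le_max_right _ _)

lemma young_exp {a u : ℝ} (ha : 0 ≤ a) (hu : 0 ≤ u) :
    a * u ≤ a * max (Real.log a) 0 + (Real.exp u - 1) := by
  have hu1 : u ≤ Real.exp u - 1 := by linarith [Real.add_one_le_exp u]
  rcases le_or_gt a 1 with h1 | h1
  · have : 0 ≤ a * max (Real.log a) 0 := mul_nonneg ha (le_max_right _ _)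
    nlinarith
  · have h2 := Real.add_one_le_exp (u - Real.log a)
    have h3 : Real.exp (u - Real.log a) = Real.exp u / a := by
      rw [Real.exp_sub, Real.exp_log (by linarith)]
    rw [h3, le_div_iff₀ (by linarith)] at h2
    have h4 : a * Real.log a ≤ a * max (Real.log a) 0 := by
      gcongr; exact le_max_left _ _
    nlinarith

lemma exp_le_cosh {u δ : ℝ} (hu : 0 ≤ u) (hδ : 0 < δ) (hδ1 : δ ≤ 1) :
    Real.exp u - 1 ≤ δ + 2 / δ * (Real.cosh u - 1) := by
  have h1 := Real.cosh_add_sinh u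
  have h2 := Real.cosh_sq u
  have h3 := Real.one_le_cosh u
  obtain ⟨r, hr⟩ : ∃ r, r = 2 / δ := ⟨_, rfl⟩
  have hrδ : r * δ = 2 := by rw [hr]; field_simp
  have hr1 : 1 ≤ r - 1 := by
    have : 2 ≤ r := by rw [hr, le_div_iff₀ hδ]; linarith
    linarith
  rw [← hr]
  set v := Real.cosh u - 1 with hv
  have hv0 : 0 ≤ v := by linarith
  have h4 : Real.sinh u ≤ δ + (r - 1) * v := by
    apply le_of_sq_le_sq _ (by nlinarith)
    have e1 : Real.sinh u ^ 2 = 2 * v + v ^ 2 := by rw [hv]; nlinarith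
    have e2 : (δ + (r - 1) * v) ^ 2 = δ ^ 2 + 2 * (2 - δ) * v + (r - 1) ^ 2 * v ^ 2 := by
      linear_combination 2 * v * hrδ
    rw [e1, e2]
    have : 1 ≤ (r - 1) ^ 2 := by nlinarith
    nlinarith [sq_nonneg δ, sq_nonneg v]
  linarith

lemma UI_bound {f : ℝ → ℝ} (hf : RL f) {y : ℝ} (hy : 0 < y) {E : Set ℝ} (hE : MeasurableSet E)
    (hEI : E ⊆ Ioo (-1 : ℝ) 1) {M δ : ℝ} (hM : 0 ≤ M) (hδ : 0 < δ) (hδ1 : δ ≤ 1) :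
    ∫ t in E, |Qf f y t| ≤ Real.pi * ((M + 1) * (2 * δ + 12 / δ * volume.real E)
      + ∫ x, {x | M < |f x|}.indicator (fun x => lgp (f x)) x) := by
  have hpi := Real.pi_pos
  have hQc := Qf_cont hf.int hy
  have hEfin : volume E ≠ ⊤ := ((measure_mono hEI).trans_lt (by simp)).ne
  have hE2 : volume.real E ≤ 2 := by
    have := measureReal_mono hEI (μ := volume) (by simp)
    rwa [Real.volume_real_Ioo_of_le (by norm_num), show (1:ℝ) - -1 = 2 by norm_num] at this
  set h : ℝ → ℝ := E.indicator (fun t => if 0 ≤ Qf f y t then 1 else -1) with hh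
  have hhm : Measurable h := by
    apply Measurable.indicator _ hE
    exact Measurable.ite (measurableSet_le measurable_const hQc.measurable) measurable_const
      measurable_const
  have hhabs : ∀ x, |h x| = E.indicator (fun _ => (1:ℝ)) x := by
    intro x
    simp only [hh, indicator]
    split_ifs <;> simp
  have hb : ∀ x, |h x| ≤ 1 := by
    intro x; rw [hhabs]; exact indicator_le_self' (fun _ _ => zero_le_one) x |>.trans le_rfl
  have hhi : Integrable h := by
    have h1 : Integrable (E.indicator (fun _ => (1:ℝ))) :=
      (integrable_indicator_iff hE).2 (integrableOn_const hEfin)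
    refine h1.mono' hhm.aestronglyMeasurable (Eventually.of_forall fun x => ?_)
    rw [Real.norm_eq_abs, hhabs]
  have hhe : ∫ x, |h x| = volume.real E := by
    simp_rw [hhabs]
    rw [integral_indicator hE]; simp
  have hcb := cosh_Q_bound hhi hb (by rw [hhe]; exact hE2) hy
  rw [hhe] at hcb
  have e1 : ∫ t in E, |Qf f y t| = ∫ t, h t * Qf f y t := by
    rw [← integral_indicator hE]
    congr 1; ext t
    simp only [hh, indicator]
    split_ifs with h1 h2
    · rw [abs_of_nonneg h2, one_mul]
    · rw [abs_of_neg (not_le.1 h2)]; ring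
    · simp
  rw [e1, Qf_swap hf.int hhi hy]
  have hQhc := Qf_cont hhi hy
  have hcoshc : Continuous (fun t => δ + 2 / δ * (Real.cosh (Qf h y t / Real.pi) - 1)) := by
    have := Real.continuous_cosh.comp (hQhc.div_const Real.pi)
    fun_prop
  set B : ℝ → ℝ := (Ioo (-1:ℝ) 1).indicator
    (fun t => δ + 2 / δ * (Real.cosh (Qf h y t / Real.pi) - 1)) with hB
  have hBi : Integrable B :=
    (integrable_indicator_iff measurableSet_Ioo).2
      ((hcoshc.continuousOn.integrableOn_Icc).mono_set Ioo_subset_Icc_self)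
  have hli : Integrable (fun x => {x | M < |f x|}.indicator (fun x => lgp (f x)) x) := by
    apply hf.llog.indicator₀
    exact nullMeasurableSet_lt aemeasurable_const hf.int.abs.aemeasurable
  have hBint : ∫ x, B x ≤ 2 * δ + 12 / δ * volume.real E := by
    rw [hB, integral_indicator measurableSet_Ioo]
    have hci : IntegrableOn (fun t => Real.cosh (Qf h y t / Real.pi) - 1) (Ioo (-1:ℝ) 1) := by
      have hc : Continuous (fun t => Real.cosh (Qf h y t / Real.pi) - 1) :=
        (Real.continuous_cosh.comp (hQhc.div_const Real.pi)).sub continuous_const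
      exact (hc.continuousOn.integrableOn_Icc).mono_set Ioo_subset_Icc_self
    rw [integral_add (integrable_const _) (hci.const_mul _), integral_const_mul]
    simp only [integral_const, measureReal_restrict_apply_univ, smul_eq_mul]
    rw [Real.volume_real_Ioo_of_le (by norm_num)]
    have : 2 / δ * (∫ t in Ioo (-1:ℝ) 1, (Real.cosh (Qf h y t / Real.pi) - 1))
      ≤ 2 / δ * (6 * volume.real E) := by gcongr
    have e3 : 2 / δ * (6 * volume.real E) = 12 / δ * volume.real E := by ring
    linarith
  rw [← integral_neg]
  calc ∫ x, -(f x * Qf h y x) ≤ ∫ x, Real.pi * ((M + 1) * B x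
        + {x | M < |f x|}.indicator (fun x => lgp (f x)) x) := by
        have hint : Integrable (fun x => Real.pi * ((M + 1) * B x
          + {x | M < |f x|}.indicator (fun x => lgp (f x)) x)) :=
          ((hBi.const_mul _).add hli).const_mul _
        have hpt : ∀ x, |f x * Qf h y x| ≤ Real.pi * ((M + 1) * B x
            + {x | M < |f x|}.indicator (fun x => lgp (f x)) x) := by
          intro x
          by_cases hx : x ∈ Ioo (-1:ℝ) 1
          · rw [hB, indicator_of_mem hx]
            set u := |Qf h y x / Real.pi| with hu
            have hu0 : 0 ≤ u := abs_nonneg _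
            have e4 : |f x * Qf h y x| = Real.pi * (|f x| * u) := by
              rw [hu, abs_mul, abs_div, abs_of_pos hpi]; field_simp
            rw [e4, ← Real.cosh_abs (Qf h y x / Real.pi), ← hu]
            gcongr
            have k1 := exp_le_cosh hu0 hδ hδ1
            have k2 : 0 ≤ Real.exp u - 1 := by linarith [Real.add_one_le_exp u]
            have k3 : u ≤ Real.exp u - 1 := by linarith [Real.add_one_le_exp u]
            by_cases hfx : M < |f x|
            · rw [indicator_of_mem (show x ∈ {x | M < |f x|} from hfx)]
              have := young_exp (abs_nonneg (f x)) hu0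
              unfold lgp
              nlinarith
            · rw [indicator_of_notMem (show x ∉ {x | M < |f x|} from hfx)]
              push Not at hfx
              have : |f x| * u ≤ M * (Real.exp u - 1) := by gcongr
              nlinarith
          · rw [hf.off x hx, hB, indicator_of_notMem hx]
            simp only [zero_mul, abs_zero, mul_zero, zero_add]
            exact mul_nonneg hpi.le (indicator_nonneg (fun _ _ => lgp_nonneg _) _)
        have hm : AEStronglyMeasurable (fun x => f x * Qf h y x) :=
          hf.int.1.mul hQhc.aestronglyMeasurable
        apply integral_mono (hint.mono' hm (Eventually.of_forall hpt)).neg hint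
        intro x
        exact (neg_le_abs _).trans (hpt x)
    _ = Real.pi * ((M + 1) * (∫ x, B x)
        + ∫ x, {x | M < |f x|}.indicator (fun x => lgp (f x)) x) := by
        rw [integral_const_mul, integral_add (hBi.const_mul _) hli, integral_const_mul]
    _ ≤ _ := by gcongr

lemma RL.tail {f : ℝ → ℝ} (hf : RL f) :
    Tendsto (fun n : ℕ => ∫ x, {x | (n : ℝ) < |f x|}.indicator (fun x => lgp (f x)) x) atTop
      (𝓝 0) := by
  have := tendsto_integral_of_dominated_convergence (μ := volume)
    (F := fun (n : ℕ) x => {x | (n : ℝ) < |f x|}.indicator (fun x => lgp (f x)) x)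
    (f := fun _ => (0:ℝ)) (fun x => lgp (f x))
    (fun n => (hf.llog.indicator₀
      (nullMeasurableSet_lt aemeasurable_const hf.int.abs.aemeasurable)).1) hf.llog
    (fun n => Eventually.of_forall fun x => by
      simp only [indicator]
      split_ifs
      · rw [Real.norm_of_nonneg (lgp_nonneg _)]
      · simp [lgp_nonneg])
    (Eventually.of_forall fun x => by
      obtain ⟨N, hN⟩ := exists_nat_ge |f x|
      refine tendsto_const_nhds.congr' ?_
      filter_upwards [eventually_ge_atTop N] with n hn
      rw [indicator_of_notMem]
      show ¬ ((n:ℝ) < |f x|)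
      rw [not_lt]
      exact hN.trans (by exact_mod_cast hn))
  simpa using this

lemma UI_small {f : ℝ → ℝ} (hf : RL f) {η : ℝ} (hη : 0 < η) :
    ∃ κ > 0, ∀ y > 0, ∀ E : Set ℝ, MeasurableSet E → E ⊆ Ioo (-1 : ℝ) 1 → volume.real E ≤ κ →
      ∫ t in E, |Qf f y t| ≤ η := by
  have hpi := Real.pi_pos
  obtain ⟨n, hn⟩ := ((hf.tail).eventually (gt_mem_nhds (show 0 < η / (2 * Real.pi) by positivity))).exists
  have hM : (0:ℝ) ≤ n := Nat.cast_nonneg n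
  set a := η / (8 * Real.pi * (n + 1)) with ha
  have ha0 : 0 < a := by positivity
  have hpa : Real.pi * (n + 1) * a = η / 8 := by rw [ha]; field_simp
  set δ := min a 1 with hδ
  have hδ0 : 0 < δ := lt_min ha0 one_pos
  have hδa : δ ≤ a := min_le_left _ _
  refine ⟨a * δ / 12, by positivity, fun y hy E hE hEI hEκ => ?_⟩
  have := UI_bound hf hy hE hEI hM hδ0 (min_le_right _ _)
  refine this.trans ?_
  have h1 : 12 / δ * volume.real E ≤ a := by
    calc _ ≤ 12 / δ * (a * δ / 12) := by gcongr
      _ = a := by field_simp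
  have h2 : 2 * δ + 12 / δ * volume.real E ≤ 3 * a := by linarith
  have h3 : Real.pi * (η / (2 * Real.pi)) = η / 2 := by field_simp
  calc _ ≤ Real.pi * ((n + 1) * (3 * a) + η / (2 * Real.pi)) := by gcongr
    _ = 3 * (Real.pi * (n + 1) * a) + Real.pi * (η / (2 * Real.pi)) := by ring
    _ ≤ η := by rw [hpa, h3]; linarith

lemma UI_bdd {f : ℝ → ℝ} (hf : RL f) :
    ∃ K : ℝ, ∀ y > 0, ∫ t in Ioo (-1 : ℝ) 1, |Qf f y t| ≤ K :=
  ⟨_, fun _ hy => UI_bound hf hy measurableSet_Ioo subset_rfl le_rfl one_pos le_rfl⟩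

lemma Qf_L1_tendsto {f : ℝ → ℝ} (hf : RL f) (y : ℕ → ℝ) (hy : ∀ n, 0 < y n)
    (h : ∀ᵐ t ∂(volume.restrict (Ioo (-1 : ℝ) 1)), Tendsto (fun n => Qf f (y n) t) atTop (𝓝 0)) :
    Tendsto (fun n => ∫ t in Ioo (-1 : ℝ) 1, |Qf f (y n) t|) atTop (𝓝 0) := by
  have hui : UnifIntegrable (fun n => Qf f (y n)) 1 (volume.restrict (Ioo (-1 : ℝ) 1)) := by
    intro η hη
    obtain ⟨κ, hκ, H⟩ := UI_small hf hη
    refine ⟨κ, hκ, fun n s hs hsκ => ?_⟩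
    rw [Measure.restrict_apply hs] at hsκ
    have h1 := H (y n) (hy n) (s ∩ Ioo (-1:ℝ) 1) (hs.inter measurableSet_Ioo) inter_subset_right
      (by
        rw [measureReal_def]
        exact ENNReal.toReal_le_of_le_ofReal hκ.le hsκ)
    rw [eLpNorm_one_eq_lintegral_enorm]
    have e : ∫⁻ x in Ioo (-1:ℝ) 1, ‖s.indicator (Qf f (y n)) x‖ₑ
      = ∫⁻ x in s ∩ Ioo (-1:ℝ) 1, ‖Qf f (y n) x‖ₑ := by
      simp_rw [enorm_indicator_eq_indicator_enorm]
      rw [lintegral_indicator hs, Measure.restrict_restrict hs]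
    rw [e]
    have hi : IntegrableOn (Qf f (y n)) (s ∩ Ioo (-1:ℝ) 1) :=
      (((Qf_cont hf.int (hy n)).continuousOn.integrableOn_Icc).mono_set Ioo_subset_Icc_self).mono_set
        inter_subset_right
    rw [← ofReal_integral_norm_eq_lintegral_enorm hi]
    exact ENNReal.ofReal_le_ofReal h1
  have h2 := tendsto_Lp_finite_of_tendsto_ae (μ := volume.restrict (Ioo (-1 : ℝ) 1)) (p := 1)
    le_rfl (by simp) (fun n => (Qf_cont hf.int (hy n)).aestronglyMeasurable) (g := fun _ => (0:ℝ))
    (by simp) hui h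
  have h3 := (ENNReal.tendsto_toReal (a := 0) (by simp)).comp h2
  simp only [ENNReal.toReal_zero] at h3
  refine h3.congr fun n => ?_
  have hi : IntegrableOn (Qf f (y n)) (Ioo (-1:ℝ) 1) :=
    ((Qf_cont hf.int (hy n)).continuousOn.integrableOn_Icc).mono_set Ioo_subset_Icc_self
  simp only [Function.comp]
  rw [eLpNorm_one_eq_lintegral_enorm]
  simp only [Pi.sub_apply, sub_zero]
  rw [← ofReal_integral_norm_eq_lintegral_enorm hi, ENNReal.toReal_ofReal]
  · rfl
  · exact integral_nonneg fun _ => norm_nonneg _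


lemma weak_lim {H : Type*} [NormedAddCommGroup H] [InnerProductSpace ℂ H] [CompleteSpace H]
    (c : ℕ → H) (K : ℝ) (hK : ∀ n, ‖c n‖ ≤ K) :
    ∃ b : H, ∀ g : H, Tendsto (fun n => inner ℂ g (c n)) (hyperfilter ℕ) (𝓝 (inner ℂ g b)) := by
  set φ : ℕ → WeakDual ℂ H := fun n =>
    StrongDual.toWeakDual (InnerProductSpace.toDual ℂ H (c n)) with hφ
  have hcomp := WeakDual.isCompact_closedBall (𝕜 := ℂ) (E := H) 0 K
  obtain ⟨x, -, hx⟩ := hcomp.ultrafilter_le_nhds ((hyperfilter ℕ).map φ) (by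
    rw [le_principal_iff]
    rw [Ultrafilter.coe_map, Filter.mem_map]
    refine Filter.mem_of_superset univ_mem ?_
    intro n _
    simp only [mem_preimage, Metric.mem_closedBall, dist_zero_right]
    have : WeakDual.toStrongDual (φ n) = InnerProductSpace.toDual ℂ H (c n) := rfl
    rw [this, LinearIsometryEquiv.norm_map]
    exact hK n)
  refine ⟨(InnerProductSpace.toDual ℂ H).symm (WeakDual.toStrongDual x), fun g => ?_⟩
  have h1 : Tendsto φ (hyperfilter ℕ) (𝓝 x) := hx
  have h2 : Tendsto (fun n => φ n g) (hyperfilter ℕ) (𝓝 (x g)) :=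
    ((WeakDual.eval_continuous (𝕜 := ℂ) g).tendsto x).comp h1
  have h3 : ∀ n, φ n g = inner ℂ (c n) g := fun n => by
    show InnerProductSpace.toDual ℂ H (c n) g = _
    rw [InnerProductSpace.toDual_apply_apply]
  have h4 : x g = inner ℂ ((InnerProductSpace.toDual ℂ H).symm (WeakDual.toStrongDual x)) g := by
    rw [InnerProductSpace.toDual_symm_apply]; rfl
  rw [h4] at h2
  simp_rw [h3] at h2
  have h5 := (Complex.continuous_conj.tendsto _).comp h2
  rw [inner_conj_symm] at h5
  refine h5.congr fun n => ?_
  simp [Function.comp, inner_conj_symm]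

lemma pk_memLp2 {y : ℝ} (hy : 0 < y) (t : ℝ) :
    MemLp (fun x : ℝ => ((pk y (x - t) : ℝ) : ℂ)) 2 := by
  have hc : Continuous (fun x : ℝ => ((pk y (x - t) : ℝ) : ℂ)) :=
    Complex.continuous_ofReal.comp ((pk_continuous hy).comp (continuous_id.sub continuous_const))
  rw [memLp_two_iff_integrable_sq_norm hc.aestronglyMeasurable]
  refine ((pk_integrable_shift hy t).const_mul (1 / y)).mono' (hc.norm.pow 2).aestronglyMeasurable
    (Eventually.of_forall fun x => ?_)
  have h1 := pk_nonneg hy (x - t)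
  have h2 := pk_le_inv hy (x - t)
  rw [norm_pow, norm_norm, Complex.norm_real, Real.norm_of_nonneg h1, sq]
  gcongr

lemma norm_add_I_sq (t y : ℝ) : ‖(t + y * Complex.I : ℂ) + Complex.I‖ ^ 2 = t ^ 2 + (y + 1) ^ 2 := by
  rw [Complex.sq_norm, Complex.normSq_apply]
  simp; ring

lemma fatou_rep {C : ℂ → ℂ} (hd : ∀ z : ℂ, 0 < z.im → DifferentiableAt ℂ C z)
    (hb : ∀ z : ℂ, 0 < z.im → ‖C z‖ ≤ 1 / ‖z + Complex.I‖) :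
    ∃ b : ℝ → ℂ, MemLp b 2 ∧ ∀ t y : ℝ, 0 < y →
      ∫ x, pk y (x - t) • b x = Real.pi * C (t + y * Complex.I) := by
  set Y : ℕ → ℝ := fun n => 1 / ((n : ℝ) + 1) with hY
  have hY0 : ∀ n, 0 < Y n := fun n => by positivity
  have hcont : ∀ n, Continuous (fun t : ℝ => C (t + Y n * Complex.I)) := by
    intro n
    rw [continuous_iff_continuousAt]
    intro t
    apply ContinuousAt.comp (f := fun t : ℝ => (t + Y n * Complex.I : ℂ)) (g := C)
    · exact (hd _ (by simpa using hY0 n)).continuousAt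
    · fun_prop
  have hDm : MemLp (fun t : ℝ => ((1 / Real.sqrt (1 + t ^ 2) : ℝ) : ℂ)) 2 := by
    have hc : Continuous (fun t : ℝ => ((1 / Real.sqrt (1 + t ^ 2) : ℝ) : ℂ)) := by
      apply Complex.continuous_ofReal.comp
      apply Continuous.div (by fun_prop) (by fun_prop)
      intro t; positivity
    rw [memLp_two_iff_integrable_sq_norm hc.aestronglyMeasurable]
    refine integrable_inv_one_add_sq.congr (Eventually.of_forall fun t => ?_)
    simp only
    rw [Complex.norm_real, Real.norm_of_nonneg (by positivity), div_pow, Real.sq_sqrt (by positivity)]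
    simp
  have hle : ∀ n (t : ℝ), ‖C (t + Y n * Complex.I)‖ ≤ ‖((1 / Real.sqrt (1 + t ^ 2) : ℝ) : ℂ)‖ := by
    intro n t
    refine (hb _ (by simpa using hY0 n)).trans ?_
    rw [Complex.norm_real, Real.norm_of_nonneg (by positivity)]
    apply one_div_le_one_div_of_le (by positivity)
    rw [Real.sqrt_le_left (norm_nonneg _), norm_add_I_sq]
    nlinarith [hY0 n]
  have hcm : ∀ n, MemLp (fun t : ℝ => C (t + Y n * Complex.I)) 2 := fun n =>
    hDm.mono (hcont n).aestronglyMeasurable (Eventually.of_forall (hle n))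
  obtain ⟨b, hbw⟩ := weak_lim (fun n => (hcm n).toLp _) ‖hDm.toLp _‖ (by
    intro n
    apply Lp.norm_le_norm_of_ae_le
    filter_upwards [(hcm n).coeFn_toLp, hDm.coeFn_toLp] with t h1 h2
    rw [h1, h2]; exact hle n t)
  refine ⟨b, Lp.memLp b, fun t y hy => ?_⟩
  have hinner : ∀ g : Lp ℂ 2 (volume : Measure ℝ), inner ℂ ((pk_memLp2 hy t).toLp _) g
      = ∫ x, pk y (x - t) • g x := by
    intro g
    rw [L2.inner_def]
    apply integral_congr_ae
    filter_upwards [(pk_memLp2 hy t).coeFn_toLp] with x hx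
    rw [hx, RCLike.inner_apply]
    simp [mul_comm]
  have h1 := hbw ((pk_memLp2 hy t).toLp _)
  simp_rw [hinner] at h1
  have h2 : ∀ n, ∫ x, pk y (x - t) • ((hcm n).toLp _ : ℝ → ℂ) x
      = Real.pi * C ((t + y * Complex.I) + Y n * Complex.I) := by
    intro n
    have := poisson_gen (fun z => C (z + Y n * Complex.I)) (Y n) (hY0 n) (by
      intro z hz
      exact DifferentiableAt.comp (g := C) (f := fun z : ℂ => z + Y n * Complex.I) z
        (hd _ (by simp; linarith)) (by fun_prop)) 1 (by
      intro z hz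
      have h0 : 0 < (z + Y n * Complex.I).im := by simp; linarith [hY0 n]
      refine (hb _ h0).trans ?_
      rw [div_le_one]
      · have := Complex.abs_im_le_norm (z + Y n * Complex.I + Complex.I)
        refine le_trans ?_ this
        refine le_trans ?_ (le_abs_self _)
        rw [Complex.add_im, Complex.I_im]; linarith
      · rw [norm_pos_iff]
        intro h
        have := congrArg Complex.im h
        rw [Complex.add_im, Complex.I_im, Complex.zero_im] at this; linarith) t y hy
    rw [← this]
    apply integral_congr_ae
    filter_upwards [(hcm n).coeFn_toLp] with x hx
    rw [hx]
    simp [pk]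
  simp_rw [h2] at h1
  have h3 : Tendsto (fun n => (Real.pi : ℂ) * C ((t + y * Complex.I) + Y n * Complex.I)) atTop
      (𝓝 (Real.pi * C (t + y * Complex.I))) := by
    apply Tendsto.const_mul
    have hcz : ContinuousAt C (t + y * Complex.I) := (hd _ (by simpa using hy)).continuousAt
    apply hcz.tendsto.comp
    have hy0 : Tendsto (fun n => (Y n : ℂ)) atTop (𝓝 ((0:ℝ) : ℂ)) :=
      (Complex.continuous_ofReal.tendsto 0).comp tendsto_one_div_add_atTop_nhds_zero_nat
    have := (hy0.mul_const Complex.I).const_add (t + y * Complex.I : ℂ)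
    simpa using this
  have h4 : ((hyperfilter ℕ : Ultrafilter ℕ) : Filter ℕ) ≤ atTop := by
    rw [← Nat.cofinite_eq_atTop]; exact hyperfilter_le_cofinite
  exact tendsto_nhds_unique h1 (h3.mono_left h4)

lemma poisson_ae_I {b : ℝ → ℂ} (hb : MemLp b 2) :
    ∀ᵐ t : ℝ, t ∈ Ioo (-1 : ℝ) 1 →
      Tendsto (fun y => ∫ x, pk y (x - t) • b x) (𝓝[>] 0) (𝓝 (Real.pi • b t)) := by
  have hloc : Integrable ((Ioo (-2:ℝ) 2).indicator b) := by
    rw [integrable_indicator_iff measurableSet_Ioo]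
    exact (hb.restrict _).integrable (by norm_num)
  have hsq : Integrable (fun x => ‖b x‖ ^ 2) := (memLp_two_iff_integrable_sq_norm hb.1).1 hb
  filter_upwards [poisson_ae hloc] with t ht htI
  rw [indicator_of_mem (show t ∈ Ioo (-2:ℝ) 2 from ⟨by linarith [htI.1], by linarith [htI.2]⟩)] at ht
  -- tail
  have hprod : ∀ y > 0, Integrable (fun x => pk y (x - t) • b x) := by
    intro y hy
    refine (((pk_memLp2 hy t).integrable_mul hb)).congr (Eventually.of_forall fun x => ?_)
    simp
  have hw : Integrable (fun x => ((pk 1 (x - t)) + ‖b x‖ ^ 2)) :=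
    (pk_integrable_shift one_pos t).add hsq
  have htail : Tendsto (fun y => ∫ x, pk y (x - t) • ((Ioo (-2:ℝ) 2)ᶜ.indicator b) x) (𝓝[>] 0)
      (𝓝 0) := by
    have hlim : Tendsto (fun y : ℝ => y * (2 * ∫ x, ((pk 1 (x - t)) + ‖b x‖ ^ 2))) (𝓝[>] 0) (𝓝 0) := by
      have : Tendsto (fun y : ℝ => y * (2 * ∫ x, ((pk 1 (x - t)) + ‖b x‖ ^ 2))) (𝓝 0)
        (𝓝 (0 * (2 * ∫ x, ((pk 1 (x - t)) + ‖b x‖ ^ 2)))) := tendsto_id.mul_const _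
      rw [zero_mul] at this
      exact this.mono_left nhdsWithin_le_nhds
    apply squeeze_zero_norm' _ hlim
    filter_upwards [self_mem_nhdsWithin] with y hy
    have hy : 0 < y := hy
    rw [← integral_const_mul, ← integral_const_mul]
    apply norm_integral_le_of_norm_le ((hw.const_mul _).const_mul _)
    refine Eventually.of_forall fun x => ?_
    rw [norm_smul, Real.norm_of_nonneg (pk_nonneg hy _)]
    have hp1 := pk_nonneg one_pos (x - t)
    by_cases hx : x ∈ Ioo (-2:ℝ) 2
    · rw [indicator_of_notMem (by simpa using hx)]
      simp only [norm_zero, mul_zero]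
      positivity
    · rw [indicator_of_mem (show x ∈ (Ioo (-2:ℝ) 2)ᶜ from hx)]
      have hxt : 1 ≤ (x - t) ^ 2 := by
        have : x ≤ -2 ∨ 2 ≤ x := by
          by_contra h
          push Not at h
          exact hx ⟨h.1, h.2⟩
        rcases this with h | h
        · nlinarith [htI.1, htI.2]
        · nlinarith [htI.1, htI.2]
      have hpk1 : pk 1 (x - t) ≤ 1 := by simpa using pk_le_inv one_pos (x - t)
      have hpk : pk y (x - t) ≤ y * (2 * pk 1 (x - t)) := by
        unfold pk
        rw [div_le_iff₀ (by positivity)]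
        have : (1:ℝ) ≤ 2 * (1 / ((x - t) ^ 2 + 1 ^ 2)) * ((x - t) ^ 2 + y ^ 2) := by
          rw [mul_one_div, div_mul_eq_mul_div, le_div_iff₀ (by positivity)]
          nlinarith [sq_nonneg y]
        calc y = y * 1 := by ring
          _ ≤ y * (2 * (1 / ((x - t) ^ 2 + 1 ^ 2)) * ((x - t) ^ 2 + y ^ 2)) := by gcongr
          _ = _ := by ring
      calc pk y (x - t) * ‖b x‖ ≤ y * (2 * pk 1 (x - t)) * ‖b x‖ := by gcongr
        _ = y * (2 * (pk 1 (x - t) * ‖b x‖)) := by ring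
        _ ≤ _ := by
          gcongr
          have := norm_nonneg (b x)
          nlinarith [sq_nonneg (pk 1 (x - t) - ‖b x‖)]
  have := ht.add htail
  rw [add_zero] at this
  refine this.congr' ?_
  filter_upwards [self_mem_nhdsWithin] with y hy
  have hy : 0 < y := hy
  have hi1 : Integrable (fun x => pk y (x - t) • (Ioo (-2:ℝ) 2).indicator b x) :=
    integrable_mul_pk hloc hy t
  have e : ∀ x, pk y (x - t) • (Ioo (-2:ℝ) 2).indicator b x
      + pk y (x - t) • (Ioo (-2:ℝ) 2)ᶜ.indicator b x = pk y (x - t) • b x := by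
    intro x
    rw [← smul_add, indicator_self_add_compl_apply]
  have hi2 : Integrable (fun x => pk y (x - t) • (Ioo (-2:ℝ) 2)ᶜ.indicator b x) := by
    refine ((hprod y hy).sub hi1).congr (Eventually.of_forall fun x => ?_)
    simp only [Pi.sub_apply]
    rw [← e x]; simp
  rw [← integral_add hi1 hi2]
  simp_rw [e]


lemma lgp_mono {a b : ℝ} (h : |a| ≤ |b|) : lgp a ≤ lgp b := by
  unfold lgp
  rcases eq_or_ne a 0 with rfl | ha
  · simp only [abs_zero, zero_mul]
    exact mul_nonneg (abs_nonneg _) (le_max_right _ _)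
  · have : 0 < |a| := abs_pos.2 ha
    have := Real.log_le_log this h
    gcongr

lemma lgp_meas {f : ℝ → ℝ} {μ : Measure ℝ} (hf : AEStronglyMeasurable f μ) :
    AEStronglyMeasurable (fun x => lgp (f x)) μ := by
  have h1 : AEMeasurable (fun x => |f x|) μ := hf.aemeasurable.abs
  exact (h1.mul ((Real.measurable_log.comp_aemeasurable h1).max aemeasurable_const)).aestronglyMeasurable

lemma RL.of_le {f g : ℝ → ℝ} (hf : RL f) (hg : AEStronglyMeasurable g) (h : ∀ x, |g x| ≤ |f x|) :
    RL g where
  int := hf.int.mono hg (Eventually.of_forall h)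
  off x hx := by
    have := h x
    rw [hf.off x hx, abs_zero] at this
    exact abs_nonpos_iff.1 this
  llog := by
    refine hf.llog.mono' (lgp_meas hg) (Eventually.of_forall fun x => ?_)
    rw [Real.norm_of_nonneg (lgp_nonneg _)]
    exact lgp_mono (h x)

lemma tends_Y : Tendsto (fun n : ℕ => 1 / ((n : ℝ) + 1)) atTop (𝓝[>] 0) := by
  rw [tendsto_nhdsWithin_iff]
  exact ⟨tendsto_one_div_add_atTop_nhds_zero_nat, Eventually.of_forall fun n => by
    show (0:ℝ) < _; positivity⟩

lemma Q_conv_nonneg {f : ℝ → ℝ} (hf : RL f) (h0 : ∀ x, 0 ≤ f x) :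
    ∀ᵐ t : ℝ, t ∈ Ioo (-1 : ℝ) 1 → ∃ l, Tendsto (fun y => Qf f y t) (𝓝[>] 0) (𝓝 l) := by
  obtain ⟨K, hK⟩ := UI_bdd hf
  have hPnn : ∀ y > 0, ∀ t, 0 ≤ Pf f y t := fun y hy t =>
    integral_nonneg fun x => mul_nonneg (h0 x) (pk_nonneg hy _)
  have hCFI : ∀ z : ℂ, 0 < z.im → 1 ≤ ‖CF f z + Complex.I‖ := by
    intro z hz
    have h1 := CF_eq hf.int hz z.re
    rw [Complex.re_add_im] at h1
    have h2 := Complex.abs_im_le_norm (CF f z + Complex.I)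
    refine le_trans ?_ h2
    refine le_trans ?_ (le_abs_self _)
    rw [h1]
    simp
    exact hPnn _ hz _
  have hzI : ∀ z : ℂ, 0 < z.im → 1 ≤ ‖z + Complex.I‖ := by
    intro z hz
    refine le_trans ?_ (Complex.abs_im_le_norm _)
    refine le_trans ?_ (le_abs_self _)
    simp; linarith
  set C : ℂ → ℂ := fun z => 1 / ((CF f z + Complex.I) * (z + Complex.I)) with hC
  have hne1 : ∀ z : ℂ, 0 < z.im → CF f z + Complex.I ≠ 0 := fun z hz => by
    rw [← norm_pos_iff]; linarith [hCFI z hz]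
  have hne2 : ∀ z : ℂ, 0 < z.im → z + Complex.I ≠ 0 := fun z hz => by
    rw [← norm_pos_iff]; linarith [hzI z hz]
  obtain ⟨b, hb, hrep⟩ := fatou_rep (C := C) (by
    intro z hz
    have h1 := CF_diff hf.int hz
    have h2 : DifferentiableAt ℂ (fun z => (CF f z + Complex.I) * (z + Complex.I)) z :=
      (h1.add_const _).mul (differentiableAt_id.add_const _)
    exact (differentiableAt_const _).div h2 (mul_ne_zero (hne1 z hz) (hne2 z hz)))
    (by
    intro z hz
    have h1 := hCFI z hz
    have h2 := hzI z hz
    simp only [hC, norm_div, norm_mul, norm_one]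
    apply one_div_le_one_div_of_le (by linarith)
    nlinarith)
  -- Fatou
  have hfat : ∀ᵐ t ∂(volume.restrict (Ioo (-1:ℝ) 1)),
      liminf (fun n : ℕ => ‖Qf f (1 / ((n : ℝ) + 1)) t‖ₑ) atTop < ⊤ := by
    have hm : ∀ n : ℕ, Measurable (fun t => ‖Qf f (1 / ((n : ℝ) + 1)) t‖ₑ) := fun n =>
      (Qf_cont hf.int (by positivity)).measurable.enorm
    apply ae_lt_top (Measurable.liminf hm)
    refine ((lintegral_liminf_le hm).trans_lt ?_).ne
    refine lt_of_le_of_lt (b := ENNReal.ofReal K) ?_ ENNReal.ofReal_lt_top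
    refine liminf_le_of_frequently_le' (Eventually.frequently (Eventually.of_forall fun n => ?_))
    have hy : 0 < 1 / ((n : ℝ) + 1) := by positivity
    have hi : IntegrableOn (Qf f (1 / ((n : ℝ) + 1))) (Ioo (-1:ℝ) 1) :=
      ((Qf_cont hf.int hy).continuousOn.integrableOn_Icc).mono_set Ioo_subset_Icc_self
    rw [← ofReal_integral_norm_eq_lintegral_enorm hi]
    exact ENNReal.ofReal_le_ofReal (hK _ hy)
  rw [ae_restrict_iff' measurableSet_Ioo] at hfat
  filter_upwards [hfat, poisson_ae hf.int, poisson_ae_I hb] with t h1 h2 h3 htI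
  specialize h1 htI
  specialize h3 htI
  have hpi : (Real.pi : ℂ) ≠ 0 := by exact_mod_cast Real.pi_ne_zero
  have hCt : Tendsto (fun y : ℝ => C (t + y * Complex.I)) (𝓝[>] 0) (𝓝 (b t)) := by
    have := h3.const_mul ((Real.pi : ℂ)⁻¹)
    have e : (Real.pi : ℂ)⁻¹ * Real.pi • b t = b t := by
      rw [Complex.real_smul]; field_simp
    rw [e] at this
    refine this.congr' ?_
    filter_upwards [self_mem_nhdsWithin] with y hy
    rw [hrep t y hy]; field_simp
  have him : ∀ y : ℝ, 0 < y → 0 < (t + y * Complex.I : ℂ).im := fun y hy => by simpa using hy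
  have hbne : b t ≠ 0 := by
    intro hb0
    rw [hb0] at hCt
    have hCn := (hCt.comp tends_Y).norm
    rw [norm_zero] at hCn
    have hCn' : Tendsto (fun n : ℕ => ‖C (t + ((1 / ((n:ℝ) + 1) : ℝ) : ℂ) * Complex.I)‖) atTop (𝓝[>] 0) := by
      rw [tendsto_nhdsWithin_iff]
      refine ⟨hCn, Eventually.of_forall fun n => ?_⟩
      have := him (1 / ((n:ℝ) + 1)) (by positivity)
      rw [mem_Ioi, norm_pos_iff]
      exact one_div_ne_zero (mul_ne_zero (hne1 _ this) (hne2 _ this))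
    have hinv := tendsto_inv_nhdsGT_zero.comp hCn'
    have hP : Tendsto (fun n : ℕ => -(1 + Pf f (1 / ((n:ℝ) + 1)) t)) atTop (𝓝 (-(1 + Real.pi * f t))) := by
      have := (h2.comp tends_Y).const_add 1 |>.neg
      refine this.congr fun n => ?_
      simp [Pf, Function.comp, mul_comm]
    have hbig := (hinv.const_mul_atTop (show (0:ℝ) < 1 / 3 by norm_num)).atTop_add hP
    have hQ : Tendsto (fun n : ℕ => |Qf f (1 / ((n:ℝ) + 1)) t|) atTop atTop := by
      refine tendsto_atTop_mono (fun n => ?_) hbig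
      set y := 1 / ((n:ℝ) + 1) with hy
      have hy0 : 0 < y := by positivity
      have hy1 : y ≤ 1 := by
        rw [hy, div_le_one (by positivity)]
        have : (0:ℝ) ≤ n := Nat.cast_nonneg n
        linarith
      have kC : ‖C (t + y * Complex.I)‖⁻¹ = ‖CF f (t + y * Complex.I) + Complex.I‖
          * ‖(t + y * Complex.I : ℂ) + Complex.I‖ := by
        simp only [hC, one_div, norm_inv, inv_inv, norm_mul]
      simp only [Function.comp]
      rw [← hy, kC]
      have k1 : ‖(t + y * Complex.I : ℂ) + Complex.I‖ ≤ 3 := by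
        refine (norm_add_le _ _).trans ?_
        have := norm_add_le (t : ℂ) (y * Complex.I)
        simp only [norm_mul, Complex.norm_I, mul_one, Complex.norm_real, Real.norm_eq_abs,
          abs_of_pos hy0] at this ⊢
        have : |t| ≤ 1 := abs_le.2 ⟨htI.1.le, htI.2.le⟩
        linarith
      have k2 : ‖CF f (t + y * Complex.I) + Complex.I‖ ≤ |Qf f y t| + Pf f y t + 1 := by
        refine (norm_add_le _ _).trans ?_
        rw [CF_eq hf.int hy0, Complex.norm_I]
        have := norm_add_le (Qf f y t : ℂ) ((Pf f y t : ℂ) * Complex.I)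
        simp only [norm_mul, Complex.norm_I, mul_one, Complex.norm_real, Real.norm_eq_abs,
          abs_of_nonneg (hPnn y hy0 t)] at this ⊢
        linarith
      have k3 := norm_nonneg (CF f (t + y * Complex.I) + Complex.I)
      have k4 : ‖CF f (t + y * Complex.I) + Complex.I‖ * ‖(t + y * Complex.I : ℂ) + Complex.I‖
        ≤ ‖CF f (t + y * Complex.I) + Complex.I‖ * 3 := by gcongr
      linarith
    have htop : Tendsto (fun n : ℕ => ‖Qf f (1 / ((n : ℝ) + 1)) t‖ₑ) atTop (𝓝 ⊤) := by
      have := ENNReal.tendsto_ofReal_atTop.comp hQ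
      refine this.congr fun n => ?_
      simp only [Function.comp]
      rw [← Real.norm_eq_abs, ofReal_norm]
    rw [htop.liminf_eq] at h1
    exact lt_irrefl _ h1
  have hz : Tendsto (fun y : ℝ => (t + y * Complex.I : ℂ) + Complex.I) (𝓝[>] 0) (𝓝 (t + Complex.I)) := by
    have hc : Continuous (fun y : ℝ => (t + y * Complex.I : ℂ) + Complex.I) := by fun_prop
    have := hc.tendsto 0
    simp only [Complex.ofReal_zero, zero_mul, add_zero] at this
    exact this.mono_left nhdsWithin_le_nhds
  have htne : (t + Complex.I : ℂ) ≠ 0 := by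
    intro h
    have := congrArg Complex.im h
    simp at this
  have hfin := ((hCt.mul hz).inv₀ (mul_ne_zero hbne htne)).sub_const Complex.I
  have hre := (Complex.continuous_re.tendsto _).comp hfin
  refine ⟨_, hre.congr' ?_⟩
  filter_upwards [self_mem_nhdsWithin] with y hy
  have hy : 0 < y := hy
  have n1 := hne1 _ (him y hy)
  have n2 := hne2 _ (him y hy)
  have e : (C (t + y * Complex.I) * (t + y * Complex.I + Complex.I))⁻¹ - Complex.I
      = CF f (t + y * Complex.I) := by
    have : C (t + y * Complex.I) * (t + y * Complex.I + Complex.I)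
      = (CF f (t + y * Complex.I) + Complex.I)⁻¹ := by
      simp only [hC]
      field_simp
    rw [this, inv_inv]; ring
  simp only [Function.comp]
  rw [e, CF_eq hf.int hy]
  simp

lemma Qf_sub {f g : ℝ → ℝ} (hf : Integrable f) (hg : Integrable g) {y : ℝ} (hy : 0 < y) (t : ℝ) :
    Qf (fun x => f x - g x) y t = Qf f y t - Qf g y t := by
  unfold Qf
  rw [← integral_sub (integrable_mul_qk hf hy t) (integrable_mul_qk hg hy t)]
  congr 1; ext x; ring

lemma T_conv {f : ℝ → ℝ} (hf : RL f) :
    ∀ᵐ t : ℝ, t ∈ Ioo (-1 : ℝ) 1 → ∃ l, Tendsto (fun y => Tf f y t) (𝓝[>] 0) (𝓝 l) := by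
  have hp : RL (fun x => max (f x) 0) := hf.of_le (hf.int.1.sup aestronglyMeasurable_const) (fun x => by
    rw [abs_of_nonneg (le_max_right _ _)]; exact max_le (le_abs_self _) (abs_nonneg _))
  have hn : RL (fun x => max (-f x) 0) := hf.of_le (hf.int.1.neg.sup aestronglyMeasurable_const) (fun x => by
    rw [abs_of_nonneg (le_max_right _ _)]; exact max_le (neg_le_abs _) (abs_nonneg _))
  filter_upwards [Q_conv_nonneg hp (fun x => le_max_right _ _), Q_conv_nonneg hn (fun x => le_max_right _ _),
    T_sub_Q hf.int] with t h1 h2 h3 htI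
  obtain ⟨l1, h1⟩ := h1 htI
  obtain ⟨l2, h2⟩ := h2 htI
  refine ⟨_, (h3.add (h1.sub h2)).congr' ?_⟩
  filter_upwards [self_mem_nhdsWithin] with y hy
  rw [← Qf_sub hp.int hn.int hy]
  have : (fun x => max (f x) 0 - max (-f x) 0) = f := by
    ext x; rcases le_total (f x) 0 with h | h
    · rw [max_eq_right h, max_eq_left (by linarith)]; ring
    · rw [max_eq_left h, max_eq_right (by linarith)]; ring
  rw [this]; ring


def sf (x : ℝ) : ℝ := Real.sqrt (1 - x ^ 2)
def wf (x : ℝ) : ℝ := 1 / sf x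

lemma sf_cont : Continuous sf := by unfold sf; fun_prop
lemma sf_nonneg (x : ℝ) : 0 ≤ sf x := Real.sqrt_nonneg _
lemma sf_le_one (x : ℝ) : sf x ≤ 1 := by
  unfold sf; exact Real.sqrt_le_iff.2 ⟨zero_le_one, by nlinarith [sq_nonneg x]⟩
lemma sf_off {x : ℝ} (hx : x ∉ Ioo (-1 : ℝ) 1) : sf x = 0 := by
  apply Real.sqrt_eq_zero_of_nonpos
  have : x ≤ -1 ∨ 1 ≤ x := by
    by_contra h; push Not at h; exact hx ⟨h.1, h.2⟩
  rcases this with h | h <;> nlinarith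
lemma sf_pos {x : ℝ} (hx : x ∈ Ioo (-1 : ℝ) 1) : 0 < sf x := by
  apply Real.sqrt_pos.2; nlinarith [hx.1, hx.2]
lemma sf_sq {x : ℝ} (hx : x ∈ Icc (-1 : ℝ) 1) : sf x ^ 2 = 1 - x ^ 2 := by
  apply Real.sq_sqrt; nlinarith [hx.1, hx.2]
lemma wf_off {x : ℝ} (hx : x ∉ Ioo (-1 : ℝ) 1) : wf x = 0 := by
  unfold wf; rw [sf_off hx]; simp
lemma wf_meas : Measurable wf := measurable_const.div sf_cont.measurable

def domf (x : ℝ) : ℝ := (Ioo (-1:ℝ) 1).indicator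
  (fun x => (1 + x) ^ (-(3/4) : ℝ) + (1 - x) ^ (-(3/4) : ℝ)) x

lemma domf_int : Integrable domf := by
  show Integrable ((Ioo (-1:ℝ) 1).indicator _)
  rw [integrable_indicator_iff measurableSet_Ioo]
  have h := intervalIntegral.intervalIntegrable_rpow' (a := 0) (b := 2) (r := (-(3/4) : ℝ)) (by norm_num)
  have h1 : IntervalIntegrable (fun x : ℝ => (1 + x) ^ (-(3/4) : ℝ)) volume (-1) 1 := by
    have := h.comp_add_left 1
    norm_num at this
    convert this using 2
  have h2 : IntervalIntegrable (fun x : ℝ => (1 - x) ^ (-(3/4) : ℝ)) volume (-1) 1 := by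
    have := h.comp_sub_left 1
    norm_num at this
    convert this.symm using 2
  have h3 := h1.add h2
  rw [intervalIntegrable_iff_integrableOn_Ioo_of_le (by norm_num)] at h3
  exact h3

lemma wf_bd (x : ℝ) : |wf x| ≤ 2 * domf x ∧ lgp (wf x) ≤ 2 * domf x := by
  by_cases hx : x ∈ Ioo (-1:ℝ) 1
  · unfold domf
    rw [indicator_of_mem hx]
    have hs := sf_pos hx
    have hw : 1 ≤ wf x := by
      unfold wf; rw [le_div_iff₀ hs, one_mul]; exact sf_le_one x
    have hu : 0 < 1 - x ^ 2 := by nlinarith [hx.1, hx.2]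
    have hwr : wf x * Real.sqrt (wf x) = (1 - x ^ 2) ^ (-(3/4) : ℝ) := by
      unfold wf sf
      rw [Real.sqrt_eq_rpow, one_div, ← Real.rpow_neg hu.le, Real.sqrt_eq_rpow,
        ← Real.rpow_mul hu.le, ← Real.rpow_add hu]
      norm_num
    have hle : (1 - x ^ 2) ^ (-(3/4) : ℝ) ≤ (1 + x) ^ (-(3/4) : ℝ) + (1 - x) ^ (-(3/4) : ℝ) := by
      have p1 : 0 < 1 + x := by linarith [hx.1]
      have p2 : 0 < 1 - x := by linarith [hx.2]
      rcases le_total 0 x with h | h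
      · have := Real.rpow_le_rpow_of_nonpos p2 (show 1 - x ≤ 1 - x ^ 2 by nlinarith)
          (show (-(3/4) : ℝ) ≤ 0 by norm_num)
        have := Real.rpow_nonneg p1.le (-(3/4))
        linarith
      · have := Real.rpow_le_rpow_of_nonpos p1 (show 1 + x ≤ 1 - x ^ 2 by nlinarith)
          (show (-(3/4) : ℝ) ≤ 0 by norm_num)
        have := Real.rpow_nonneg p2.le (-(3/4))
        linarith
    rw [← hwr] at hle
    have hsq : 1 ≤ Real.sqrt (wf x) := Real.one_le_sqrt.2 hw
    have hlog : max (Real.log (wf x)) 0 ≤ 2 * Real.sqrt (wf x) := by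
      apply max_le _ (by positivity)
      have := Real.log_le_sub_one_of_pos (show 0 < Real.sqrt (wf x) by positivity)
      rw [Real.log_sqrt (by linarith)] at this
      linarith
    unfold lgp
    rw [abs_of_nonneg (by linarith)]
    constructor
    · nlinarith
    · calc wf x * max (Real.log (wf x)) 0 ≤ wf x * (2 * Real.sqrt (wf x)) := by gcongr
        _ = 2 * (wf x * Real.sqrt (wf x)) := by ring
        _ ≤ _ := by gcongr
  · unfold domf
    rw [wf_off hx, indicator_of_notMem hx]
    simp [lgp]

lemma wf_RL : RL wf where
  int := (domf_int.const_mul 2).mono' wf_meas.aestronglyMeasurable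
    (Eventually.of_forall fun x => (wf_bd x).1)
  off _ hx := wf_off hx
  llog := (domf_int.const_mul 2).mono' (lgp_meas wf_meas.aestronglyMeasurable)
    (Eventually.of_forall fun x => by
      rw [Real.norm_of_nonneg (lgp_nonneg _)]; exact (wf_bd x).2)

lemma wf_int_pos : 0 < ∫ x, wf x := by
  rw [integral_pos_iff_support_of_nonneg (f := wf) (fun x => one_div_nonneg.2 (sf_nonneg x)) wf_RL.int]
  have : Ioo (-1:ℝ) 1 ⊆ Function.support wf := fun x hx => by
    rw [Function.mem_support]; exact (one_div_pos.2 (sf_pos hx)).ne'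
  refine lt_of_lt_of_le ?_ (measure_mono this)
  simp

lemma cut_meas (e t : ℝ) : MeasurableSet {x : ℝ | e ≤ |x - t|} :=
  measurableSet_le measurable_const (measurable_id.sub_const t).abs

lemma Tf_intOn {f : ℝ → ℝ} (hf : Integrable f) {e : ℝ} (he : 0 < e) (t : ℝ) :
    IntegrableOn (fun x => f x / (x - t)) {x : ℝ | e ≤ |x - t|} := by
  refine (hf.abs.div_const e).integrableOn.mono' ?_ ?_
  · exact (hf.1.aemeasurable.div (by fun_prop)).aestronglyMeasurable.restrict
  · rw [ae_restrict_iff' (cut_meas e t)]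
    refine Eventually.of_forall fun x hx => ?_
    have hx : e ≤ |x - t| := hx
    rw [norm_div, Real.norm_eq_abs, Real.norm_eq_abs]
    gcongr

lemma cut_tendsto {f : ℝ → ℝ} (hf : Integrable f) (t : ℝ) :
    Tendsto (fun e : ℝ => ∫ x in {x : ℝ | e ≤ |x - t|}, f x) (𝓝[>] 0) (𝓝 (∫ x, f x)) := by
  have : ∀ e : ℝ, ∫ x in {x : ℝ | e ≤ |x - t|}, f x = ∫ x, {x : ℝ | e ≤ |x - t|}.indicator f x :=
    fun e => (integral_indicator (cut_meas e t)).symm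
  simp_rw [this]
  apply tendsto_integral_filter_of_dominated_convergence (fun x => ‖f x‖)
  · exact Eventually.of_forall fun e => hf.1.indicator (cut_meas e t)
  · exact Eventually.of_forall fun e => Eventually.of_forall fun x => norm_indicator_le_norm_self _ _
  · exact hf.norm
  · have h0 : ∀ᵐ x : ℝ, x ≠ t := Measure.ae_ne volume t
    filter_upwards [h0] with x hx
    refine tendsto_const_nhds.congr' ?_
    have : 0 < |x - t| := abs_pos.2 (sub_ne_zero.2 hx)
    filter_upwards [Ioo_mem_nhdsGT this] with e he
    rw [indicator_of_mem]
    exact he.2.le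

def Nf (t x : ℝ) : ℝ := 1 - x * t + sf x * sf t
def Af (t x : ℝ) : ℝ := -(1 / sf t) * (Real.log (Nf t x) - Real.log (x - t))

lemma Nf_pos {t x : ℝ} (ht : t ∈ Ioo (-1:ℝ) 1) (hx : x ∈ Icc (-1:ℝ) 1) : 0 < Nf t x := by
  unfold Nf
  have := mul_nonneg (sf_nonneg x) (sf_nonneg t)
  have : x * t < 1 := by
    rcases le_total 0 t with h | h
    · nlinarith [ht.2, hx.2]
    · nlinarith [ht.1, hx.1]
  linarith

lemma Nf_cont (t : ℝ) : Continuous (Nf t) := by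
  unfold Nf
  have := sf_cont
  fun_prop

lemma Af_contOn {t : ℝ} (ht : t ∈ Ioo (-1:ℝ) 1) {S : Set ℝ} (hS : S ⊆ Icc (-1:ℝ) 1) (htS : t ∉ S) :
    ContinuousOn (Af t) S := by
  unfold Af
  apply ContinuousOn.mul continuousOn_const
  apply ContinuousOn.sub
  · exact (Nf_cont t).continuousOn.log fun x hx => (Nf_pos ht (hS hx)).ne'
  · apply ContinuousOn.log (by fun_prop)
    intro x hx h
    apply htS
    rw [sub_eq_zero] at h
    rwa [← h]

lemma Af_deriv {t x : ℝ} (ht : t ∈ Ioo (-1:ℝ) 1) (hx : x ∈ Ioo (-1:ℝ) 1) (hxt : x ≠ t) :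
    HasDerivAt (Af t) (wf x / (x - t)) x := by
  have hs := sf_pos hx
  have hσ := sf_pos ht
  have hs2 := sf_sq (Ioo_subset_Icc_self hx)
  have hσ2 := sf_sq (Ioo_subset_Icc_self ht)
  have hN := Nf_pos ht (Ioo_subset_Icc_self hx)
  have hx0 : x - t ≠ 0 := sub_ne_zero.2 hxt
  have d1 : HasDerivAt sf (-x / sf x) x := by
    have : HasDerivAt (fun x : ℝ => 1 - x ^ 2) (-(2 * x)) x := by
      simpa using (hasDerivAt_pow 2 x).const_sub 1
    have h2 := this.sqrt (by nlinarith [hx.1, hx.2])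
    refine h2.congr_deriv ?_
    show _ = -x / Real.sqrt (1 - x ^ 2)
    field_simp
  have d2 : HasDerivAt (Nf t) (-t + -x / sf x * sf t) x := by
    have h1 : HasDerivAt (fun x : ℝ => 1 - x * t) (-t) x := by
      simpa using ((hasDerivAt_id x).mul_const t).const_sub 1
    exact h1.add (d1.mul_const _)
  have d3 : HasDerivAt (fun x => x - t) 1 x := (hasDerivAt_id x).sub_const t
  have d4 := ((d2.log hN.ne').sub (d3.log hx0)).const_mul (-(1 / sf t))
  refine d4.congr_deriv ?_
  have hNe : Nf t x = 1 - x * t + sf x * sf t := rfl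
  unfold wf
  have hN' := hN.ne'
  field_simp
  rw [hNe]
  generalize sf x = s at *
  generalize sf t = σ at *
  linear_combination (-s) * hσ2 + σ * hs2

lemma Tf_wf_eq {t : ℝ} (ht : t ∈ Ioo (-1:ℝ) 1) {e : ℝ} (he : 0 < e) (h1 : -1 < t - e) (h2 : t + e < 1) :
    Tf wf e t = -(1 / sf t) * (Real.log (Nf t (t - e)) - Real.log (Nf t (t + e))) := by
  have hint := Tf_intOn wf_RL.int he t
  have hset : {x : ℝ | e ≤ |x - t|} = Iic (t - e) ∪ Ici (t + e) := by
    ext x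
    simp only [mem_union, mem_Iic, mem_Ici]
    show e ≤ |x - t| ↔ _
    rw [le_abs]
    constructor
    · rintro (h | h)
      · right; linarith
      · left; linarith
    · rintro (h | h)
      · right; linarith
      · left; linarith
  rw [hset] at hint
  unfold Tf
  rw [hset, setIntegral_union (by
    rw [Set.disjoint_left]; intro x hx hx'
    simp only [mem_Iic, mem_Ici] at hx hx'
    linarith) measurableSet_Ici (hint.mono_set subset_union_left) (hint.mono_set subset_union_right)]
  have i1 : ∫ x in Iic (t - e), wf x / (x - t) = ∫ x in (-1:ℝ)..(t - e), wf x / (x - t) := by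
    rw [intervalIntegral.integral_of_le h1.le]
    apply setIntegral_eq_of_subset_of_forall_sdiff_eq_zero measurableSet_Iic Ioc_subset_Iic_self
    intro x hx
    rw [wf_off, zero_div]
    intro hxI
    exact hx.2 ⟨hxI.1, hx.1⟩
  have i2 : ∫ x in Ici (t + e), wf x / (x - t) = ∫ x in (t + e)..1, wf x / (x - t) := by
    rw [intervalIntegral.integral_of_le h2.le, ← integral_Icc_eq_integral_Ioc]
    apply setIntegral_eq_of_subset_of_forall_sdiff_eq_zero measurableSet_Ici Icc_subset_Ici_self
    intro x hx
    rw [wf_off, zero_div]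
    intro hxI
    exact hx.2 ⟨hx.1, hxI.2.le⟩
  have j1 : IntervalIntegrable (fun x => wf x / (x - t)) volume (-1) (t - e) := by
    rw [intervalIntegrable_iff_integrableOn_Ioc_of_le h1.le]
    exact hint.mono_set (Ioc_subset_Iic_self.trans subset_union_left)
  have j2 : IntervalIntegrable (fun x => wf x / (x - t)) volume (t + e) 1 := by
    rw [intervalIntegrable_iff_integrableOn_Icc_of_le h2.le]
    exact hint.mono_set (Icc_subset_Ici_self.trans subset_union_right)
  have k1 := intervalIntegral.integral_eq_sub_of_hasDerivAt_of_le h1.le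
    (Af_contOn ht (S := Icc (-1) (t - e)) (fun x hx => ⟨hx.1, by linarith [hx.2, ht.2]⟩)
      (fun h => by linarith [h.2]))
    (fun x hx => Af_deriv ht ⟨hx.1, by linarith [hx.2, ht.2]⟩ (by linarith [hx.2] : x < t).ne) j1
  have k2 := intervalIntegral.integral_eq_sub_of_hasDerivAt_of_le h2.le
    (Af_contOn ht (S := Icc (t + e) 1) (fun x hx => ⟨by linarith [hx.1, ht.1], hx.2⟩)
      (fun h => by linarith [h.1]))
    (fun x hx => Af_deriv ht ⟨by linarith [hx.1, ht.1], hx.2⟩ (by linarith [hx.1] : t < x).ne') j2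
  have s1 : sf 1 = 0 := by simp [sf]
  have s2 : sf (-1) = 0 := by simp [sf]
  have a1 : Af t (-1) = 0 := by
    unfold Af Nf
    rw [s2, show (-1 - t) = -(1 + t) by ring, Real.log_neg_eq_log]
    ring_nf
  have a2 : Af t 1 = 0 := by
    unfold Af Nf
    rw [s1]; ring_nf
  rw [i1, i2, k1, k2, a1, a2]
  unfold Af
  rw [show t - e - t = -e by ring, show t + e - t = e by ring, Real.log_neg_eq_log]
  ring

lemma Tf_wf_tendsto {t : ℝ} (ht : t ∈ Ioo (-1:ℝ) 1) :
    Tendsto (fun e => Tf wf e t) (𝓝[>] 0) (𝓝 0) := by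
  have hc : Tendsto (fun e : ℝ => -(1 / sf t) * (Real.log (Nf t (t - e)) - Real.log (Nf t (t + e))))
      (𝓝 0) (𝓝 0) := by
    have hN := (Nf_pos ht (Ioo_subset_Icc_self ht)).ne'
    have l1 : Tendsto (fun e : ℝ => Real.log (Nf t (t - e))) (𝓝 0) (𝓝 (Real.log (Nf t t))) := by
      apply Tendsto.log _ hN
      have : Continuous (fun e : ℝ => Nf t (t - e)) := (Nf_cont t).comp (by fun_prop)
      simpa using this.tendsto 0
    have l2 : Tendsto (fun e : ℝ => Real.log (Nf t (t + e))) (𝓝 0) (𝓝 (Real.log (Nf t t))) := by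
      apply Tendsto.log _ hN
      have : Continuous (fun e : ℝ => Nf t (t + e)) := (Nf_cont t).comp (by fun_prop)
      simpa using this.tendsto 0
    simpa using (l1.sub l2).const_mul (-(1 / sf t))
  refine (hc.mono_left nhdsWithin_le_nhds).congr' ?_
  have hm : 0 < min (1 - t) (1 + t) := lt_min (by linarith [ht.2]) (by linarith [ht.1])
  filter_upwards [Ioo_mem_nhdsGT hm] with e he
  have := he.2
  rw [lt_min_iff] at this
  exact (Tf_wf_eq ht he.1 (by linarith [this.2]) (by linarith [this.1])).symm

def kap : ℝ := ∫ x, wf x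
def kap1 : ℝ := ∫ x, x * wf x

lemma xwf_int : Integrable (fun x => x * wf x) := by
  refine wf_RL.int.mono (measurable_id.mul wf_meas).aestronglyMeasurable
    (Eventually.of_forall fun x => ?_)
  by_cases hx : x ∈ Ioo (-1:ℝ) 1
  · rw [norm_mul]
    have : ‖x‖ ≤ 1 := abs_le.2 ⟨hx.1.le, hx.2.le⟩
    nlinarith [norm_nonneg (wf x)]
  · simp [wf_off hx]

lemma Tf_sf_tendsto {t : ℝ} (ht : t ∈ Ioo (-1:ℝ) 1) :
    Tendsto (fun e => Tf sf e t) (𝓝[>] 0) (𝓝 (-(kap * t + kap1))) := by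
  have hi : Integrable (fun x => x * wf x + t * wf x) := xwf_int.add (wf_RL.int.const_mul t)
  have h1 := cut_tendsto hi t
  rw [integral_add xwf_int (wf_RL.int.const_mul t), integral_const_mul] at h1
  have h2 := ((Tf_wf_tendsto ht).const_mul (1 - t ^ 2)).sub h1
  have e : (1 - t ^ 2) * 0 - ((∫ x, x * wf x) + t * ∫ x, wf x) = -(kap * t + kap1) := by
    unfold kap kap1; ring
  rw [e] at h2
  refine h2.congr' ?_
  filter_upwards [self_mem_nhdsWithin] with e he
  have he : 0 < e := he
  unfold Tf
  rw [← integral_const_mul, ← integral_sub ((Tf_intOn wf_RL.int he t).const_mul _) hi.integrableOn]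
  apply setIntegral_congr_fun (cut_meas e t)
  intro x hx
  have hx : e ≤ |x - t| := hx
  have hx0 : x - t ≠ 0 := abs_pos.1 (he.trans_le hx)
  have hsw : sf x = (1 - x ^ 2) * wf x := by
    by_cases hxI : x ∈ Ioo (-1:ℝ) 1
    · have := sf_pos hxI
      unfold wf
      rw [← sf_sq (Ioo_subset_Icc_self hxI)]
      field_simp
    · rw [sf_off hxI, wf_off hxI, mul_zero]
  simp only
  rw [hsw]
  field_simp
  ring


def gk (k : ℕ) (x : ℝ) : ℝ := x ^ k * sf x

lemma gk_cont (k : ℕ) : Continuous (gk k) := (continuous_pow k).mul sf_cont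

lemma gk_off (k : ℕ) {x : ℝ} (hx : x ∉ Ioo (-1 : ℝ) 1) : gk k x = 0 := by
  unfold gk; rw [sf_off hx, mul_zero]

lemma gk_abs (k : ℕ) (x : ℝ) : |gk k x| ≤ 1 := by
  by_cases hx : x ∈ Ioo (-1:ℝ) 1
  · unfold gk
    rw [abs_mul, abs_pow, abs_of_nonneg (sf_nonneg x)]
    have h1 : |x| ≤ 1 := abs_le.2 ⟨hx.1.le, hx.2.le⟩
    exact mul_le_one₀ (pow_le_one₀ (abs_nonneg x) h1) (sf_nonneg x) (sf_le_one x)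
  · rw [gk_off k hx]; simp

lemma gk_int (k : ℕ) : Integrable (gk k) := by
  have h1 : IntegrableOn (gk k) (Ioo (-1:ℝ) 1) :=
    ((gk_cont k).continuousOn.integrableOn_Icc).mono_set Ioo_subset_Icc_self
  rw [← integrable_indicator_iff measurableSet_Ioo] at h1
  refine h1.congr (Eventually.of_forall fun x => ?_)
  by_cases hx : x ∈ Ioo (-1:ℝ) 1
  · rw [indicator_of_mem hx]
  · rw [indicator_of_notMem hx, gk_off k hx]

lemma sf_holder {x t : ℝ} (ht : t ∈ Ioo (-1:ℝ) 1) (hx : |x - t| ≤ 2) :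
    |sf x - sf t| ≤ 2 * Real.sqrt |x - t| := by
  have h1 : |(1 - x ^ 2) - (1 - t ^ 2)| ≤ 4 * |x - t| := by
    have : (1 - x ^ 2) - (1 - t ^ 2) = -((x - t) * (x + t)) := by ring
    rw [this, abs_neg, abs_mul, mul_comm]
    gcongr
    rw [abs_le] at hx ⊢
    constructor <;> linarith [ht.1, ht.2, hx.1, hx.2]
  have key : ∀ a b : ℝ, Real.sqrt a - Real.sqrt b ≤ Real.sqrt |a - b| := by
    intro a b
    have h2 : Real.sqrt a ≤ Real.sqrt (|a - b| + max b 0) := by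
      apply Real.sqrt_le_sqrt
      linarith [le_abs_self (a - b), le_max_left b 0]
    have h3 : Real.sqrt (|a - b| + max b 0) ≤ Real.sqrt |a - b| + Real.sqrt (max b 0) := by
      have n1 := Real.sqrt_nonneg |a - b|
      have n2 := Real.sqrt_nonneg (max b 0)
      rw [Real.sqrt_le_left (by positivity)]
      nlinarith [Real.sq_sqrt (abs_nonneg (a - b)), Real.sq_sqrt (le_max_right b 0)]
    have h4 : Real.sqrt (max b 0) = Real.sqrt b := by
      rcases le_total b 0 with h | h
      · rw [max_eq_right h, Real.sqrt_zero, Real.sqrt_eq_zero_of_nonpos h]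
      · rw [max_eq_left h]
    linarith
  have h5 : Real.sqrt |(1 - x ^ 2) - (1 - t ^ 2)| ≤ 2 * Real.sqrt |x - t| := by
    refine (Real.sqrt_le_sqrt h1).trans (le_of_eq ?_)
    rw [Real.sqrt_mul (by norm_num), show (4:ℝ) = 2 ^ 2 by norm_num, Real.sqrt_sq (by norm_num)]
  rw [abs_le]
  constructor
  · have := key (1 - t ^ 2) (1 - x ^ 2)
    rw [abs_sub_comm] at this
    unfold sf; linarith
  · have := key (1 - x ^ 2) (1 - t ^ 2)
    unfold sf; linarith

lemma qk_le_inv {y : ℝ} (_hy : 0 < y) (s : ℝ) : |qk y s| ≤ 1 / |s| := by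
  unfold qk
  rcases eq_or_ne s 0 with rfl | hs
  · simp
  · have : 0 < |s| := abs_pos.2 hs
    rw [abs_div, abs_of_pos (show 0 < s ^ 2 + y ^ 2 by positivity),
      div_le_div_iff₀ (by positivity) this, ← sq, sq_abs]
    nlinarith [sq_nonneg y]

lemma Qs_bdd : ∃ B : ℝ, ∀ y > 0, ∀ t ∈ Ioo (-1:ℝ) 1, |Qf sf y t| ≤ B := by
  have hroot : IntegrableOn (fun u : ℝ => 2 * (Real.sqrt |u| * (1 / |u|))) (Icc (-2:ℝ) 2) := by
    have h := intervalIntegral.intervalIntegrable_rpow' (a := 0) (b := 2) (r := (-(1/2) : ℝ)) (by norm_num)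
    have e : ∀ u : ℝ, 0 < u → Real.sqrt u * (1 / u) = u ^ (-(1/2) : ℝ) := by
      intro u hu
      rw [Real.sqrt_eq_rpow, one_div, one_div, ← Real.rpow_neg_one u, ← Real.rpow_add hu]
      norm_num
    have hp : IntegrableOn (fun u : ℝ => Real.sqrt |u| * (1 / |u|)) (Ioc (0:ℝ) 2) := by
      rw [intervalIntegrable_iff_integrableOn_Ioc_of_le (by norm_num)] at h
      refine h.congr_fun (fun u hu => ?_) measurableSet_Ioc
      simp only
      rw [abs_of_pos hu.1, e u hu.1]
    have hp' : IntervalIntegrable (fun u : ℝ => Real.sqrt |u| * (1 / |u|)) volume 0 2 := by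
      rwa [intervalIntegrable_iff_integrableOn_Ioc_of_le (by norm_num)]
    have hn' : IntervalIntegrable (fun u : ℝ => Real.sqrt |u| * (1 / |u|)) volume (-2) 0 := by
      have := (hp'.comp_sub_left 0).symm
      simpa using this
    have := hn'.trans hp'
    rw [intervalIntegrable_iff_integrableOn_Icc_of_le (by norm_num)] at this
    exact this.const_mul 2
  refine ⟨∫ u in Icc (-2:ℝ) 2, 2 * (Real.sqrt |u| * (1 / |u|)), fun y hy t ht => ?_⟩
  have e1 : Qf sf y t = ∫ u, sf (u + t) * qk y u := by
    unfold Qf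
    rw [← integral_add_right_eq_self (fun x => sf x * qk y (x - t)) t]
    simp
  have e2 : ∫ u, sf (u + t) * qk y u = ∫ u in Icc (-2:ℝ) 2, sf (u + t) * qk y u := by
    symm
    apply setIntegral_eq_integral_of_forall_compl_eq_zero
    intro u hu
    rw [sf_off, zero_mul]
    intro h
    exact hu ⟨by linarith [h.1, ht.2], by linarith [h.2, ht.1]⟩
  have qc := qk_continuous hy
  have i1 : IntegrableOn (fun u => sf (u + t) * qk y u) (Icc (-2:ℝ) 2) := by
    apply Continuous.integrableOn_Icc
    exact (sf_cont.comp (by fun_prop)).mul qc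
  have i2 : IntegrableOn (fun u => sf t * qk y u) (Icc (-2:ℝ) 2) :=
    (continuous_const.mul qc).integrableOn_Icc
  have e3 : ∫ u in Icc (-2:ℝ) 2, sf t * qk y u = 0 := by
    rw [integral_Icc_eq_integral_Ioc, ← intervalIntegral.integral_of_le (by norm_num)]
    have : ∫ u in (-2:ℝ)..2, sf t * qk y u = - ∫ u in (-2:ℝ)..2, sf t * qk y u := by
      conv_lhs => rw [← neg_neg (2:ℝ), ← intervalIntegral.integral_comp_neg]
      simp only [neg_neg, qk_neg, mul_neg, intervalIntegral.integral_neg]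
    linarith
  have e4 : Qf sf y t = ∫ u in Icc (-2:ℝ) 2, (sf (u + t) * qk y u - sf t * qk y u) := by
    rw [integral_sub i1 i2, e3, sub_zero, e1, e2]
  rw [e4, ← Real.norm_eq_abs]
  apply norm_integral_le_of_norm_le hroot
  rw [ae_restrict_iff' measurableSet_Icc]
  refine Eventually.of_forall fun u hu => ?_
  have h1 := sf_holder (x := u + t) ht (by simpa using abs_le.2 hu)
  rw [add_sub_cancel_right] at h1
  rw [← sub_mul, norm_mul, Real.norm_eq_abs, Real.norm_eq_abs, ← mul_assoc]
  have h2 := qk_le_inv hy u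
  gcongr

def Lk : ℕ → ℝ → ℝ
  | 0 => fun t => -(kap * t + kap1)
  | k + 1 => fun t => t * Lk k t + ∫ x, gk k x

lemma gk_zero : gk 0 = sf := by ext x; simp [gk]

lemma Qg_succ (k : ℕ) {y : ℝ} (hy : 0 < y) (t : ℝ) :
    Qf (gk (k + 1)) y t = t * Qf (gk k) y t + (∫ x, gk k x) - y * Pf (gk k) y t := by
  unfold Qf Pf
  have h1 := integrable_mul_qk (gk_int k) hy t
  have h2 := integrable_mul_pk' (gk_int k) hy t
  rw [← integral_const_mul, ← integral_const_mul, ← integral_add (h1.const_mul t) (gk_int k)]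
  have h3 : Integrable (fun x => t * (gk k x * qk y (x - t)) + gk k x) :=
    (h1.const_mul t).add (gk_int k)
  rw [← integral_sub h3 (h2.const_mul y)]
  congr 1; ext x
  unfold gk qk pk
  have : (x - t) ^ 2 + y ^ 2 ≠ 0 := by positivity
  field_simp
  ring

lemma Qg_bdd (k : ℕ) : ∃ B : ℝ, ∀ y > 0, y ≤ 1 → ∀ t ∈ Ioo (-1:ℝ) 1, |Qf (gk k) y t| ≤ B := by
  induction k with
  | zero =>
    obtain ⟨B, hB⟩ := Qs_bdd
    refine ⟨B, fun y hy _ t ht => ?_⟩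
    rw [gk_zero]; exact hB y hy t ht
  | succ k ih =>
    obtain ⟨B, hB⟩ := ih
    refine ⟨B + |∫ x, gk k x| + Real.pi, fun y hy hy1 t ht => ?_⟩
    rw [Qg_succ k hy]
    have h1 := hB y hy hy1 t ht
    have h2 := Pf_le_pi (gk_int k) (gk_abs k) hy t
    have h3 : |t| ≤ 1 := abs_le.2 ⟨ht.1.le, ht.2.le⟩
    have h4 : |t * Qf (gk k) y t| ≤ B := by
      rw [abs_mul]; nlinarith [abs_nonneg (Qf (gk k) y t)]
    have h5 : |y * Pf (gk k) y t| ≤ Real.pi := by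
      rw [abs_mul, abs_of_pos hy]; nlinarith [abs_nonneg (Pf (gk k) y t)]
    refine (abs_sub _ _).trans ?_
    have := abs_add_le (t * Qf (gk k) y t) (∫ x, gk k x)
    linarith

lemma Qg_lim (k : ℕ) : ∀ᵐ t : ℝ, t ∈ Ioo (-1:ℝ) 1 →
    Tendsto (fun y => Qf (gk k) y t) (𝓝[>] 0) (𝓝 (Lk k t)) := by
  induction k with
  | zero =>
    rw [gk_zero]
    have hi : Integrable sf := by rw [← gk_zero]; exact gk_int 0
    filter_upwards [T_sub_Q hi] with t h ht
    have := (Tf_sf_tendsto ht).sub h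
    rw [sub_zero] at this
    exact this.congr fun y => by ring
  | succ k ih =>
    filter_upwards [ih] with t h ht
    have h1 := ((h ht).const_mul t).add_const (∫ x, gk k x)
    have h2 : Tendsto (fun y => y * Pf (gk k) y t) (𝓝[>] 0) (𝓝 0) := by
      have hl : Tendsto (fun y : ℝ => y * Real.pi) (𝓝[>] 0) (𝓝 0) := by
        have : Tendsto (fun y : ℝ => y * Real.pi) (𝓝 0) (𝓝 (0 * Real.pi)) := tendsto_id.mul_const _
        rw [zero_mul] at this
        exact this.mono_left nhdsWithin_le_nhds
      apply squeeze_zero_norm' _ hl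
      filter_upwards [self_mem_nhdsWithin] with y hy
      have hy : 0 < y := hy
      rw [norm_mul, Real.norm_of_nonneg hy.le]
      gcongr
      exact Pf_le_pi (gk_int k) (gk_abs k) hy t
    have h3 := h1.sub h2
    rw [sub_zero] at h3
    refine h3.congr' ?_
    filter_upwards [self_mem_nhdsWithin] with y hy
    rw [Qg_succ k hy]

lemma Lk_form (k : ℕ) : ∃ c : ℕ → ℝ, ∀ t, Lk k t
    = -kap * t ^ (k + 1) + ∑ i ∈ Finset.range (k + 1), c i * t ^ i := by
  induction k with
  | zero => exact ⟨fun _ => -kap1, fun t => by simp [Lk]; ring⟩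
  | succ k ih =>
    obtain ⟨c, hc⟩ := ih
    refine ⟨fun i => if i = 0 then (∫ x, gk k x) else c (i - 1), fun t => ?_⟩
    rw [Finset.sum_range_succ']
    simp only [Lk, Nat.add_one_ne_zero, if_false, if_true, Nat.add_sub_cancel]
    rw [hc t, mul_add, Finset.mul_sum]
    have : ∀ i, t * (c i * t ^ i) = c i * t ^ (i + 1) := fun i => by ring
    simp_rw [this]
    ring

lemma Lk_cont (k : ℕ) : Continuous (Lk k) := by
  obtain ⟨c, hc⟩ := Lk_form k
  rw [show Lk k = _ from funext hc]
  fun_prop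

lemma int_mul_cont {φ h : ℝ → ℝ} (hφ : RL φ) (hh : Continuous h) : Integrable (fun x => φ x * h x) := by
  obtain ⟨B, hB⟩ := (isCompact_Icc (a := (-1:ℝ)) (b := 1)).exists_bound_of_continuousOn hh.continuousOn
  refine (hφ.int.abs.mul_const B).mono' (hφ.int.1.mul hh.aestronglyMeasurable)
    (Eventually.of_forall fun x => ?_)
  by_cases hx : x ∈ Ioo (-1:ℝ) 1
  · rw [norm_mul, Real.norm_eq_abs]
    gcongr
    exact hB x (Ioo_subset_Icc_self hx)
  · rw [hφ.off x hx]; simp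

lemma orth {f : ℝ → ℝ} (hf : RL f)
    (h : ∀ᵐ t : ℝ, t ∈ Ioo (-1:ℝ) 1 → Tendsto (fun e => Tf f e t) (𝓝[>] 0) (𝓝 0)) (k : ℕ) :
    ∫ x, f x * Lk k x = 0 := by
  set Y : ℕ → ℝ := fun n => 1 / ((n:ℝ) + 1) with hY
  have hY0 : ∀ n, 0 < Y n := fun n => by positivity
  have hY1 : ∀ n, Y n ≤ 1 := fun n => by
    simp only [hY]
    rw [div_le_one (by positivity)]
    have : (0:ℝ) ≤ n := Nat.cast_nonneg n
    linarith
  have hQ : ∀ᵐ t ∂(volume.restrict (Ioo (-1 : ℝ) 1)), Tendsto (fun n => Qf f (Y n) t) atTop (𝓝 0) := by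
    rw [ae_restrict_iff' measurableSet_Ioo]
    filter_upwards [h, T_sub_Q hf.int] with t h1 h2 ht
    have := ((h1 ht).sub h2).comp tends_Y
    rw [sub_zero] at this
    refine this.congr fun n => ?_
    simp [Function.comp, hY]
  have hL1 := Qf_L1_tendsto hf Y hY0 hQ
  have hA : Tendsto (fun n => ∫ t, gk k t * Qf f (Y n) t) atTop (𝓝 0) := by
    apply squeeze_zero_norm _ hL1
    intro n
    have e : ∫ t, gk k t * Qf f (Y n) t = ∫ t in Ioo (-1:ℝ) 1, gk k t * Qf f (Y n) t := by
      symm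
      apply setIntegral_eq_integral_of_forall_compl_eq_zero
      intro x hx
      rw [gk_off k hx, zero_mul]
    rw [e]
    have hi : IntegrableOn (Qf f (Y n)) (Ioo (-1:ℝ) 1) :=
      ((Qf_cont hf.int (hY0 n)).continuousOn.integrableOn_Icc).mono_set Ioo_subset_Icc_self
    apply norm_integral_le_of_norm_le hi.abs
    refine Eventually.of_forall fun x => ?_
    rw [norm_mul, Real.norm_eq_abs, Real.norm_eq_abs]
    have := gk_abs k x
    nlinarith [abs_nonneg (Qf f (Y n) x)]
  obtain ⟨B, hB⟩ := Qg_bdd k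
  have hBt : Tendsto (fun n => ∫ x, f x * Qf (gk k) (Y n) x) atTop (𝓝 (∫ x, f x * Lk k x)) := by
    apply tendsto_integral_of_dominated_convergence (fun x => |f x| * B)
    · exact fun n => hf.int.1.mul (Qf_cont (gk_int k) (hY0 n)).aestronglyMeasurable
    · exact hf.int.abs.mul_const B
    · intro n
      refine Eventually.of_forall fun x => ?_
      by_cases hx : x ∈ Ioo (-1:ℝ) 1
      · rw [norm_mul, Real.norm_eq_abs]
        gcongr
        exact hB _ (hY0 n) (hY1 n) x hx
      · rw [hf.off x hx]; simp
    · filter_upwards [Qg_lim k] with x hx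
      by_cases hxI : x ∈ Ioo (-1:ℝ) 1
      · exact ((hx hxI).comp tends_Y).const_mul (f x)
      · rw [hf.off x hxI]; simp
  have hC : Tendsto (fun n => ∫ x, f x * Qf (gk k) (Y n) x) atTop (𝓝 0) := by
    have := hA.neg
    rw [neg_zero] at this
    refine this.congr fun n => ?_
    rw [Qf_swap hf.int (gk_int k) (hY0 n), neg_neg]
  exact tendsto_nhds_unique hBt hC


lemma int_mul_cont' {φ h : ℝ → ℝ} (h1 : Integrable φ) (h0 : ∀ x, x ∉ Ioo (-1:ℝ) 1 → φ x = 0)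
    (hh : Continuous h) : Integrable (fun x => φ x * h x) := by
  obtain ⟨B, hB⟩ := (isCompact_Icc (a := (-1:ℝ)) (b := 1)).exists_bound_of_continuousOn hh.continuousOn
  refine (h1.abs.mul_const B).mono' (h1.1.mul hh.aestronglyMeasurable)
    (Eventually.of_forall fun x => ?_)
  by_cases hx : x ∈ Ioo (-1:ℝ) 1
  · rw [norm_mul, Real.norm_eq_abs]
    gcongr
    exact hB x (Ioo_subset_Icc_self hx)
  · rw [h0 x hx]; simp

lemma moments_zero {φ : ℝ → ℝ} (h1 : Integrable φ) (h0 : ∀ x, x ∉ Ioo (-1:ℝ) 1 → φ x = 0)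
    (hm : ∫ x, φ x = 0) (hL : ∀ k, ∫ x, φ x * Lk k x = 0) (j : ℕ) : ∫ x, φ x * x ^ j = 0 := by
  induction j using Nat.strong_induction_on with
  | _ j ih =>
  rcases j with _ | k
  · simpa using hm
  · obtain ⟨c, hc⟩ := Lk_form k
    have h := hL k
    have e : ∀ x, φ x * Lk k x = -kap * (φ x * x ^ (k + 1))
        + ∑ i ∈ Finset.range (k + 1), c i * (φ x * x ^ i) := by
      intro x
      rw [hc x, mul_add, Finset.mul_sum]
      congr 1
      · ring
      · exact Finset.sum_congr rfl fun i _ => by ring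
    have hi : ∀ i, Integrable (fun x => φ x * x ^ i) := fun i =>
      int_mul_cont' h1 h0 (continuous_id.pow i)
    simp_rw [e] at h
    rw [integral_add ((hi _).const_mul _) (integrable_finsetSum _ fun i _ => (hi i).const_mul _),
      integral_finsetSum _ fun i _ => (hi i).const_mul _, integral_const_mul] at h
    have z : ∑ i ∈ Finset.range (k + 1), ∫ x, c i * (φ x * x ^ i) = 0 := by
      apply Finset.sum_eq_zero
      intro i hi'
      rw [integral_const_mul, ih i (Finset.mem_range.1 hi'), mul_zero]
    rw [z, add_zero] at h
    have hk : kap ≠ 0 := wf_int_pos.ne'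
    rcases mul_eq_zero.1 h with h | h
    · exact absurd (neg_eq_zero.1 h) hk
    · exact h

lemma poly_zero {φ : ℝ → ℝ} (h1 : Integrable φ) (h0 : ∀ x, x ∉ Ioo (-1:ℝ) 1 → φ x = 0)
    (hm : ∀ j : ℕ, ∫ x, φ x * x ^ j = 0) (p : Polynomial ℝ) : ∫ x, φ x * p.eval x = 0 := by
  have hi : ∀ i : ℕ, Integrable (fun x => φ x * x ^ i) := fun i =>
    int_mul_cont' h1 h0 (continuous_id.pow i)
  have e : ∀ x, φ x * p.eval x = ∑ i ∈ Finset.range (p.natDegree + 1), p.coeff i * (φ x * x ^ i) := by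
    intro x
    rw [Polynomial.eval_eq_sum_range, Finset.mul_sum]
    exact Finset.sum_congr rfl fun i _ => by ring
  simp_rw [e]
  rw [integral_finsetSum _ fun i _ => (hi i).const_mul _]
  exact Finset.sum_eq_zero fun i _ => by rw [integral_const_mul, hm, mul_zero]

lemma zero_of_moments {φ : ℝ → ℝ} (h1 : Integrable φ) (h0 : ∀ x, x ∉ Ioo (-1:ℝ) 1 → φ x = 0)
    (hm : ∀ j : ℕ, ∫ x, φ x * x ^ j = 0) : ∀ᵐ x, φ x = 0 := by
  apply ae_eq_zero_of_integral_contDiff_smul_eq_zero h1.locallyIntegrable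
  intro g hg _
  have hgc := hg.continuous
  simp only [smul_eq_mul, mul_comm (g _)]
  have hA : 0 ≤ ∫ x, |φ x| := integral_nonneg fun x => abs_nonneg _
  have key : ∀ e > 0, |∫ x, φ x * g x| ≤ e * ∫ x, |φ x| := by
    intro e he
    obtain ⟨p, hp⟩ := exists_polynomial_near_of_continuousOn (-1) 1 g hgc.continuousOn e he
    have := poly_zero h1 h0 hm p
    rw [← sub_zero (∫ x, φ x * g x), ← this, ← integral_sub (int_mul_cont' h1 h0 hgc)
      (int_mul_cont' h1 h0 p.continuous), ← integral_const_mul, ← Real.norm_eq_abs]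
    apply norm_integral_le_of_norm_le (h1.abs.const_mul e)
    refine Eventually.of_forall fun x => ?_
    by_cases hx : x ∈ Ioo (-1:ℝ) 1
    · rw [← mul_sub, norm_mul, mul_comm, Real.norm_eq_abs, Real.norm_eq_abs, abs_sub_comm]
      gcongr
      exact (hp x (Ioo_subset_Icc_self hx)).le
    · rw [h0 x hx]; simp
  by_contra hne
  have hpos : 0 < |∫ x, φ x * g x| := abs_pos.2 hne
  have := key (|∫ x, φ x * g x| / (2 * ((∫ x, |φ x|) + 1))) (by positivity)
  rw [div_mul_eq_mul_div, le_div_iff₀ (by positivity)] at this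
  nlinarith

lemma real_kernel {f : ℝ → ℝ} (hf : RL f)
    (h : ∀ᵐ t : ℝ, t ∈ Ioo (-1:ℝ) 1 → Tendsto (fun e => Tf f e t) (𝓝[>] 0) (𝓝 0)) :
    ∃ c : ℝ, ∀ᵐ x, f x = c * wf x := by
  have hk : kap ≠ 0 := wf_int_pos.ne'
  refine ⟨(∫ x, f x) / kap, ?_⟩
  set c := (∫ x, f x) / kap with hc
  have hw := wf_RL
  have hi : Integrable (fun x => f x - c * wf x) := hf.int.sub (hw.int.const_mul c)
  have h0 : ∀ x, x ∉ Ioo (-1:ℝ) 1 → f x - c * wf x = 0 := fun x hx => by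
    rw [hf.off x hx, hw.off x hx]; simp
  have hm : ∫ x, (f x - c * wf x) = 0 := by
    rw [integral_sub hf.int (hw.int.const_mul c), integral_const_mul]
    change _ - c * kap = 0
    rw [hc, div_mul_cancel₀ _ hk, sub_self]
  have hL : ∀ k, ∫ x, (f x - c * wf x) * Lk k x = 0 := by
    intro k
    have e : ∀ x, (f x - c * wf x) * Lk k x = f x * Lk k x - c * (wf x * Lk k x) := fun x => by ring
    simp_rw [e]
    rw [integral_sub (int_mul_cont hf (Lk_cont k)) ((int_mul_cont hw (Lk_cont k)).const_mul c),
      integral_const_mul, orth hf h k,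
      orth hw (Eventually.of_forall fun t ht => Tf_wf_tendsto ht) k]
    simp
  filter_upwards [zero_of_moments hi h0 (moments_zero hi h0 hm hL)] with x hx
  linarith

lemma RL_of {f : ℝ → ℂ} (hf : MemLlogL f) (g : ℝ → ℝ) (hg : AEStronglyMeasurable g μI)
    (hgf : ∀ x, |g x| ≤ ‖f x‖) : RL ((Ioo (-1:ℝ) 1).indicator g) := by
  obtain ⟨m, hl⟩ := hf
  have mI := measurableSet_Ioo (a := (-1:ℝ)) (b := 1)
  have hfi : IntegrableOn (fun x => ‖f x‖) (Ioo (-1:ℝ) 1) := by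
    have hc : IntegrableOn (fun _ : ℝ => Real.exp 1) (Ioo (-1:ℝ) 1) := by
      apply integrableOn_const
      · rw [Real.volume_Ioo]; exact ENNReal.ofReal_ne_top
      · simp
    refine (hc.add hl).mono' m.norm (Eventually.of_forall fun x => ?_)
    rw [norm_norm]
    show ‖f x‖ ≤ Real.exp 1 + ‖f x‖ * max (Real.log ‖f x‖) 0
    rcases le_total ‖f x‖ (Real.exp 1) with h | h
    · have : 0 ≤ ‖f x‖ * max (Real.log ‖f x‖) 0 := mul_nonneg (norm_nonneg _) (le_max_right _ _)
      linarith
    · have h1 : 1 ≤ Real.log ‖f x‖ := by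
        rw [Real.le_log_iff_exp_le (lt_of_lt_of_le (Real.exp_pos 1) h)]; exact h
      have h2 : 1 ≤ max (Real.log ‖f x‖) 0 := h1.trans (le_max_left _ _)
      nlinarith [norm_nonneg (f x), Real.exp_pos 1]
  have hgm : AEStronglyMeasurable ((Ioo (-1:ℝ) 1).indicator g) :=
    (aestronglyMeasurable_indicator_iff mI).2 hg
  have hF : RL ((Ioo (-1:ℝ) 1).indicator fun x => ‖f x‖) := by
    refine ⟨(integrable_indicator_iff mI).2 hfi, fun x hx => indicator_of_notMem hx _, ?_⟩
    refine ((integrable_indicator_iff mI).2 hl).congr (Eventually.of_forall fun x => ?_)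
    by_cases hx : x ∈ Ioo (-1:ℝ) 1
    · simp only [indicator_of_mem hx, lgp, abs_norm]
    · simp only [indicator_of_notMem hx, lgp, abs_zero, zero_mul]
  refine hF.of_le hgm fun x => ?_
  by_cases hx : x ∈ Ioo (-1:ℝ) 1
  · simp only [indicator_of_mem hx, abs_norm]; exact hgf x
  · simp only [indicator_of_notMem hx, abs_zero, le_refl]

lemma FHT_int {f : ℝ → ℂ} {u v : ℝ → ℝ} (hu : RL u) (hv : RL v)
    (h : ∀ᵐ x ∂μI, f x = (u x : ℂ) + Complex.I * (v x : ℂ)) {e : ℝ} (he : 0 < e) (t : ℝ) :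
    ∫ x in {x : ℝ | x ∈ Set.Ioo (-1 : ℝ) 1 ∧ e ≤ |x - t|}, f x / ((x : ℂ) - (t : ℂ))
      = ((Tf u e t : ℝ) : ℂ) + Complex.I * ((Tf v e t : ℝ) : ℂ) := by
  have mC : MeasurableSet {x : ℝ | e ≤ |x - t|} :=
    measurableSet_le measurable_const (by fun_prop)
  have mI := measurableSet_Ioo (a := (-1:ℝ)) (b := 1)
  have hS : {x : ℝ | x ∈ Set.Ioo (-1 : ℝ) 1 ∧ e ≤ |x - t|} = {x : ℝ | e ≤ |x - t|} ∩ Ioo (-1) 1 := by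
    ext x; exact and_comm
  have e1 : ∫ x in {x : ℝ | x ∈ Set.Ioo (-1 : ℝ) 1 ∧ e ≤ |x - t|}, f x / ((x : ℂ) - (t : ℂ))
      = ∫ x in {x : ℝ | x ∈ Set.Ioo (-1 : ℝ) 1 ∧ e ≤ |x - t|},
        (((u x / (x - t) : ℝ) : ℂ) + Complex.I * ((v x / (x - t) : ℝ) : ℂ)) := by
    apply setIntegral_congr_ae (by rw [hS]; exact mC.inter mI)
    unfold μI at h
    rw [ae_restrict_iff' mI] at h
    filter_upwards [h] with x hx hx'
    rw [hx hx'.1]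
    push_cast
    ring
  have e2 : ∫ x in {x : ℝ | x ∈ Set.Ioo (-1 : ℝ) 1 ∧ e ≤ |x - t|},
        (((u x / (x - t) : ℝ) : ℂ) + Complex.I * ((v x / (x - t) : ℝ) : ℂ))
      = ∫ x in {x : ℝ | e ≤ |x - t|},
        (((u x / (x - t) : ℝ) : ℂ) + Complex.I * ((v x / (x - t) : ℝ) : ℂ)) := by
    rw [hS]
    symm
    apply setIntegral_eq_of_subset_of_forall_sdiff_eq_zero mC inter_subset_left
    intro x hx
    have : x ∉ Ioo (-1:ℝ) 1 := fun h' => hx.2 ⟨hx.1, h'⟩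
    rw [hu.off x this, hv.off x this]; simp
  have iu := Tf_intOn hu.int he t
  have iv := Tf_intOn hv.int he t
  have iu' : Integrable (fun x => ((u x / (x - t) : ℝ) : ℂ)) (volume.restrict {x : ℝ | e ≤ |x - t|}) :=
    iu.ofReal
  have iv' : Integrable (fun x => ((v x / (x - t) : ℝ) : ℂ)) (volume.restrict {x : ℝ | e ≤ |x - t|}) :=
    iv.ofReal
  rw [e1, e2, integral_add iu' (iv'.const_mul _), integral_const_mul, integral_complex_ofReal, integral_complex_ofReal]
  rfl

lemma FHT_eq {f : ℝ → ℂ} {u v : ℝ → ℝ} (hu : RL u) (hv : RL v)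
    (h : ∀ᵐ x ∂μI, f x = (u x : ℂ) + Complex.I * (v x : ℂ)) {t a b : ℝ}
    (ha : Tendsto (fun e => Tf u e t) (𝓝[>] 0) (𝓝 a))
    (hb : Tendsto (fun e => Tf v e t) (𝓝[>] 0) (𝓝 b)) :
    FHT f t = (Real.pi : ℂ)⁻¹ * ((a : ℂ) + Complex.I * (b : ℂ)) := by
  unfold FHT
  apply Tendsto.limUnder_eq
  have h1 : Tendsto (fun e => (Real.pi : ℂ)⁻¹ * (((Tf u e t : ℝ) : ℂ) + Complex.I * ((Tf v e t : ℝ) : ℂ)))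
      (𝓝[>] 0) (𝓝 ((Real.pi : ℂ)⁻¹ * ((a : ℂ) + Complex.I * (b : ℂ)))) :=
    ((((Complex.continuous_ofReal.tendsto a).comp ha)).add
      (((Complex.continuous_ofReal.tendsto b).comp hb).const_mul _)).const_mul _
  refine h1.congr' ?_
  filter_upwards [self_mem_nhdsWithin] with e he
  rw [FHT_int hu hv h he t]

lemma Tf_const_mul (f : ℝ → ℝ) (c e t : ℝ) : Tf (fun x => c * f x) e t = c * Tf f e t := by
  unfold Tf
  rw [← integral_const_mul]
  congr 1
  ext x
  ring

theorem FHT_kernel (f : ℝ → ℂ) (hf : MemLlogL f) :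
    (∀ᵐ t ∂μI, FHT f t = 0) ↔
      ∃ c : ℂ, ∀ᵐ x : ℝ ∂μI, f x = c / (Real.sqrt (1 - x ^ 2) : ℂ) := by
  have mI := measurableSet_Ioo (a := (-1:ℝ)) (b := 1)
  set u := (Ioo (-1:ℝ) 1).indicator (fun x => (f x).re) with hu_def
  set v := (Ioo (-1:ℝ) 1).indicator (fun x => (f x).im) with hv_def
  have hu : RL u := RL_of hf _ (Complex.continuous_re.comp_aestronglyMeasurable hf.1)
    fun x => Complex.abs_re_le_norm _
  have hv : RL v := RL_of hf _ (Complex.continuous_im.comp_aestronglyMeasurable hf.1)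
    fun x => Complex.abs_im_le_norm _
  have huv : ∀ x ∈ Ioo (-1:ℝ) 1, f x = (u x : ℂ) + Complex.I * (v x : ℂ) := by
    intro x hx
    rw [hu_def, hv_def, indicator_of_mem hx, indicator_of_mem hx, mul_comm, Complex.re_add_im]
  have hae : ∀ᵐ x ∂μI, f x = (u x : ℂ) + Complex.I * (v x : ℂ) := by
    unfold μI
    rw [ae_restrict_iff' mI]
    exact Eventually.of_forall huv
  constructor
  · intro h
    unfold μI at h
    rw [ae_restrict_iff' mI] at h
    have both : ∀ᵐ t : ℝ, t ∈ Ioo (-1:ℝ) 1 → Tendsto (fun e => Tf u e t) (𝓝[>] 0) (𝓝 0) ∧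
        Tendsto (fun e => Tf v e t) (𝓝[>] 0) (𝓝 0) := by
      filter_upwards [h, T_conv hu, T_conv hv] with t h1 h2 h3 ht
      obtain ⟨a, ha⟩ := h2 ht
      obtain ⟨b, hb⟩ := h3 ht
      have := h1 ht
      rw [FHT_eq hu hv hae ha hb] at this
      have hpi : (Real.pi : ℂ)⁻¹ ≠ 0 := inv_ne_zero (by exact_mod_cast Real.pi_ne_zero)
      have h4 := (mul_eq_zero.1 this).resolve_left hpi
      have hr := congrArg Complex.re h4
      have him := congrArg Complex.im h4
      simp at hr him
      subst hr; subst him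
      exact ⟨ha, hb⟩
    obtain ⟨c, hc⟩ := real_kernel hu (both.mono fun t ht h' => (ht h').1)
    obtain ⟨d, hd⟩ := real_kernel hv (both.mono fun t ht h' => (ht h').2)
    refine ⟨(c : ℂ) + Complex.I * (d : ℂ), ?_⟩
    unfold μI
    rw [ae_restrict_iff' mI]
    filter_upwards [hc, hd] with x h1 h2 hx
    rw [huv x hx, h1, h2]
    simp only [wf, sf]
    push_cast
    ring
  · rintro ⟨c, hc⟩
    have hw := wf_RL
    unfold μI at hc ⊢
    rw [ae_restrict_iff' mI] at hc ⊢
    have ec : ∀ᵐ x, u x = c.re * wf x ∧ v x = c.im * wf x := by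
      filter_upwards [hc] with x hx
      by_cases hxI : x ∈ Ioo (-1:ℝ) 1
      · have h1 := hx hxI
        rw [hu_def, hv_def, indicator_of_mem hxI, indicator_of_mem hxI, h1]
        simp only [wf, sf, Complex.div_ofReal_re, Complex.div_ofReal_im]
        constructor <;> ring
      · rw [hu.off x hxI, hv.off x hxI, hw.off x hxI]; simp
    have key : ∀ (w : ℝ → ℝ) (a : ℝ), (∀ᵐ x, w x = a * wf x) → ∀ t ∈ Ioo (-1:ℝ) 1,
        Tendsto (fun e => Tf w e t) (𝓝[>] 0) (𝓝 0) := by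
      intro w a hw' t ht
      have h1 := (Tf_wf_tendsto ht).const_mul a
      rw [mul_zero] at h1
      refine h1.congr fun e => ?_
      rw [← Tf_const_mul]
      unfold Tf
      apply integral_congr_ae
      apply ae_restrict_of_ae
      filter_upwards [hw'] with x hx
      rw [hx]
    refine Eventually.of_forall fun t ht => ?_
    rw [FHT_eq hu hv hae (key u _ (ec.mono fun x h => h.1) t ht)
      (key v _ (ec.mono fun x h => h.2) t ht)]
    simp
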